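/- arXiv:1607.02334 — 7 statements merged into one kernel-verified Lean document; each statement's English description precedes it below -/
import Mathlib

section
/- For every integer i ≥ 3 there exists a finite tree G of diameter 6i + 4 and a vertex v of G such that for every integer r with 2 ≤ r ≤ i−1, BC_{6r+2}(v) > BC_{6r+3}(v) and BC_{6r+3}(v) < BC_{6r+4}(v). In particular, the profile (BC_2(v), BC_3(v), …, BC_d(v)) of v has at least i−2 dips, and the diameter is Θ(i). -/
open scoped Classical

noncomputable section

/-- `v` is an interior vertex of the (unique, in a tree) shortest `s`–`t` path:
`v ≠ s`, `v ≠ t`, and `dist s v + dist v t = dist s t`. -/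
def IsInterior {V : Type*} (G : SimpleGraph V) (v s t : V) : Prop :=
  v ≠ s ∧ v ≠ t ∧ G.dist s v + G.dist v t = G.dist s t

/-- `Pvtx G k v` : the number of unordered pairs `{s,t}` of vertices with
`2 ≤ dist s t ≤ k` such that `v` is an interior vertex of the `s`–`t` path
(counted as ordered pairs and divided by two). -/
def Pvtx {V : Type*} [Fintype V] (G : SimpleGraph V) (k : ℕ) (v : V) : ℕ :=
  (Finset.univ.filter (fun p : V × V =>
    2 ≤ G.dist p.1 p.2 ∧ G.dist p.1 p.2 ≤ k ∧ IsInterior G v p.1 p.2)).card / 2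

/-- `Ptot G k` : the number of unordered pairs `{s,t}` of vertices with
`2 ≤ dist s t ≤ k` (counted as ordered pairs and divided by two). -/
def Ptot {V : Type*} [Fintype V] (G : SimpleGraph V) (k : ℕ) : ℕ :=
  (Finset.univ.filter (fun p : V × V =>
    2 ≤ G.dist p.1 p.2 ∧ G.dist p.1 p.2 ≤ k)).card / 2

/-- The normalized `k`-betweenness centrality `BC_k(v) = P_k(v) / P_k`. -/
def BC {V : Type*} [Fintype V] (G : SimpleGraph V) (k : ℕ) (v : V) : ℝ :=
  (Pvtx G k v : ℝ) / (Ptot G k : ℝ)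

/-- The diameter of a finite graph: the maximum of `dist s t` over all pairs. -/
def diam {V : Type*} [Fintype V] (G : SimpleGraph V) : ℕ :=
  Finset.univ.sup (fun p : V × V => G.dist p.1 p.2)

end

/-!
Take the path `0, 1, …, 6i + 2`, attach `m` pendant vertices to each hub, the hubs being `0` and all
`x ≡ 2, 3 (mod 6)`, and let `v` be the vertex `1`. When `m` is large, pairs of pendant vertices
outnumber all other pairs, and the pendant vertices at hubs `x` and `y` are at distance
`|x - y| + 2`. Such a pair passes through `v` exactly when one of the hubs is `0`, so it then has
distance `x + 2 ≡ 4, 5 (mod 6)`; the pairs that avoid `v` have distance `≡ 1, 2, 3 (mod 6)`. Hence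
going from `6r + 2` to `6r + 3` adds essentially only pairs avoiding `v`, and going from `6r + 3` to
`6r + 4` adds essentially only pairs through `v`.
-/

open Finset

open SimpleGraph hiding diam

/-! ### Distances and trees -/

section Graph

variable {V V' : Type*} {G : SimpleGraph V} {G' : SimpleGraph V'}

lemma le_add_dist_of_forall_adj {f : V → ℕ} (hf : ∀ x y, G.Adj x y → f x ≤ f y + 1) {x y : V}
    (hxy : G.Reachable x y) : f x ≤ f y + G.dist x y := by
  obtain ⟨w, hw⟩ := hxy.exists_walk_length_eq_dist
  rw [← hw]
  clear hw hxy
  induction w with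
  | nil => simp
  | cons h p ih =>
    rw [Walk.length_cons]
    have := hf _ _ h
    lia

lemma dist_map_le (f : G →g G') {x y : V} (hxy : G.Reachable x y) :
    G'.dist (f x) (f y) ≤ G.dist x y := by
  obtain ⟨w, hw⟩ := hxy.exists_walk_length_eq_dist
  rw [← hw, ← w.length_map f]
  exact dist_le _

lemma dist_iso_apply (e : G ≃g G') (x y : V) : G'.dist (e x) (e y) = G.dist x y := by
  by_cases hxy : G.Reachable x y
  · refine le_antisymm (dist_map_le e.toHom hxy) ?_
    simpa using dist_map_le e.symm.toHom (e.reachable_iff.2 hxy)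
  · rw [dist_eq_zero_of_not_reachable hxy,
      dist_eq_zero_of_not_reachable (mt e.reachable_iff.1 hxy)]

lemma dist_eq_dist_add_one_of_forall_adj_eq (hG : G.Connected) {x u y : V} (hxu : G.Adj x u)
    (hx : ∀ w, G.Adj x w → w = u) (hxy : x ≠ y) : G.dist x y = G.dist u y + 1 := by
  refine le_antisymm ?_ ?_
  · have := hG.dist_triangle (u := x) (v := u) (w := y)
    rw [dist_eq_one_iff_adj.2 hxu] at this
    lia
  · obtain ⟨w, hw⟩ := hG.exists_walk_length_eq_dist x y
    cases w with
    | nil => exact absurd rfl hxy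
    | cons h p =>
      obtain rfl := hx _ h
      rw [← hw, Walk.length_cons]
      exact Nat.succ_le_succ (dist_le p)

lemma isTree_of_connected_of_card_edgeSet_lt [Finite V] (hG : G.Connected)
    (hcard : Nat.card G.edgeSet < Nat.card V) : G.IsTree :=
  isTree_iff_connected_and_card.2
    ⟨hG, le_antisymm hcard hG.card_vert_le_card_edgeSet_add_one⟩

lemma isTree_pathGraph (n : ℕ) : (pathGraph (n + 1)).IsTree := by
  refine isTree_of_connected_of_card_edgeSet_lt (pathGraph_connected n) ?_
  have hsub : (pathGraph (n + 1)).edgeSet ⊆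
      Set.range fun j : Fin n ↦ s(j.castSucc, j.succ) := by
    intro e
    induction e with | h x y => ?_
    rw [mem_edgeSet, pathGraph_adj]
    rintro (h | h)
    · exact ⟨⟨x, by lia⟩, Sym2.eq_iff.2 (.inl ⟨Fin.ext rfl, Fin.ext h⟩)⟩
    · exact ⟨⟨y, by lia⟩, Sym2.eq_iff.2 (.inr ⟨Fin.ext rfl, Fin.ext h⟩)⟩
  calc Nat.card (pathGraph (n + 1)).edgeSet
      ≤ Nat.card (Set.range fun j : Fin n ↦ s(j.castSucc, j.succ)) :=
        Nat.card_mono (Set.toFinite _) hsub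
    _ ≤ Nat.card (Fin n) := Finite.card_range_le _
    _ < Nat.card (Fin (n + 1)) := by simp

lemma dist_pathGraph {n : ℕ} (x y : Fin n) : (pathGraph n).dist x y = Nat.dist x y := by
  refine le_antisymm ?_ ?_
  · wlog hxy : x ≤ y generalizing x y
    · rw [dist_comm, Nat.dist_comm]
      exact this y x (le_of_not_ge hxy)
    rw [Nat.dist_eq_sub_of_le hxy]
    induction hk : (y - x : ℕ) generalizing y with
    | zero => simp [Fin.ext (show (x : ℕ) = y by lia)]
    | succ k ih =>
      let z : Fin n := ⟨y - 1, by lia⟩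
      have hzy : (pathGraph n).dist z y = 1 :=
        dist_eq_one_iff_adj.2 (pathGraph_adj.2 (.inl (show (y - 1 : ℕ) + 1 = y by lia)))
      calc (pathGraph n).dist x y
          ≤ (pathGraph n).dist x z + (pathGraph n).dist z y :=
            (pathGraph_preconnected n x z).dist_triangle_left y
        _ ≤ k + 1 := by
            rw [hzy]
            gcongr
            exact ih z (show (x : ℕ) ≤ y - 1 by lia) (show (y - 1 - x : ℕ) = k by lia)
  · have hlip : ∀ u w, (pathGraph n).Adj u w → Nat.dist u y ≤ Nat.dist w y + 1 := by
      intro u w h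
      rw [pathGraph_adj] at h
      unfold Nat.dist
      lia
    simpa using le_add_dist_of_forall_adj hlip (pathGraph_preconnected n x y)

/-- `v` lies on a shortest path from `s` to `t`, the endpoints allowed. -/
def IsBetween (G : SimpleGraph V) (v s t : V) : Prop :=
  G.dist s v + G.dist v t = G.dist s t

lemma isBetween_pathGraph_iff {n : ℕ} {v s t : Fin n} :
    IsBetween (pathGraph n) v s t ↔ s ≤ v ∧ v ≤ t ∨ t ≤ v ∧ v ≤ s := by
  simp only [IsBetween, dist_pathGraph, Nat.dist]
  lia

end Graph

/-! ### Growth of the betweenness centrality -/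

section Betweenness

variable {V V' : Type*} {G : SimpleGraph V} {G' : SimpleGraph V'} {v : V} {k : ℕ}

lemma isInterior_comm {s t : V} : IsInterior G v s t ↔ IsInterior G v t s := by
  unfold IsInterior
  rw [dist_comm (u := t), dist_comm (u := v) (v := s), dist_comm (u := t) (v := s), add_comm]
  tauto

lemma isInterior_iso_apply (e : G ≃g G') (s t : V) :
    IsInterior G' (e v) (e s) (e t) ↔ IsInterior G v s t := by
  simp [IsInterior, dist_iso_apply]

variable [Fintype V] [Fintype V']

/-- The ordered pairs of vertices whose distance lies in `D` and whose connecting path has `v` as an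
interior vertex. `D = Icc 2 k` gives `P_k(v)`, counted twice. -/
noncomputable def throughPairs (G : SimpleGraph V) (v : V) (D : Finset ℕ) : Finset (V × V) :=
  {p | G.dist p.1 p.2 ∈ D ∧ IsInterior G v p.1 p.2}

/-- The ordered pairs of vertices whose distance lies in `D` and whose connecting path does not have
`v` as an interior vertex. -/
noncomputable def avoidingPairs (G : SimpleGraph V) (v : V) (D : Finset ℕ) : Finset (V × V) :=
  {p | G.dist p.1 p.2 ∈ D ∧ ¬ IsInterior G v p.1 p.2}

lemma two_dvd_card_filter_of_symmetric_of_irreflexive {r : V → V → Prop} [DecidableRel r]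
    (hsymm : ∀ x y, r x y → r y x) (hirrefl : ∀ x, ¬ r x x) : 2 ∣ #{p : V × V | r p.1 p.2} := by
  let R : SimpleGraph V := ⟨r, ⟨hsymm⟩, ⟨hirrefl⟩⟩
  exact ⟨#R.edgeFinset, by convert R.two_mul_card_edgeFinset.symm⟩

lemma two_mul_Pvtx (G : SimpleGraph V) (k : ℕ) (v : V) :
    2 * Pvtx G k v = #(throughPairs G v (Icc 2 k)) := by
  have hdvd : 2 ∣ #(throughPairs G v (Icc 2 k)) :=
    two_dvd_card_filter_of_symmetric_of_irreflexive
      (r := fun s t ↦ G.dist s t ∈ Icc 2 k ∧ IsInterior G v s t)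
      (fun s t h ↦ by rwa [G.dist_comm, isInterior_comm]) (by simp)
  simpa only [Pvtx, throughPairs, mem_Icc, and_assoc] using Nat.mul_div_cancel' hdvd

lemma two_mul_Ptot (G : SimpleGraph V) (k : ℕ) (v : V) :
    2 * Ptot G k =
      #(throughPairs G v (Icc 2 k)) + #(avoidingPairs G v (Icc 2 k)) := by
  have hdvd : 2 ∣ #{p : V × V | G.dist p.1 p.2 ∈ Icc 2 k} :=
    two_dvd_card_filter_of_symmetric_of_irreflexive (r := fun s t ↦ G.dist s t ∈ Icc 2 k)
      (fun s t h ↦ by rwa [G.dist_comm]) (by simp)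
  rw [throughPairs, avoidingPairs, ← filter_filter, ← filter_filter,
    card_filter_add_card_filter_not]
  simpa only [Ptot, mem_Icc] using Nat.mul_div_cancel' hdvd

lemma BC_eq_card_div (G : SimpleGraph V) (k : ℕ) (v : V) :
    BC G k v = (#(throughPairs G v (Icc 2 k)) : ℝ) /
      (#(throughPairs G v (Icc 2 k)) + #(avoidingPairs G v (Icc 2 k))) := by
  rw [← Nat.cast_add, ← two_mul_Ptot, ← two_mul_Pvtx, Nat.cast_mul, Nat.cast_mul,
    mul_div_mul_left _ _ (by simp), BC]

lemma card_filter_dist_mem_Icc_succ (G : SimpleGraph V) (hk : 1 ≤ k) (Q : V × V → Prop)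
    [DecidablePred Q] :
    #{p : V × V | G.dist p.1 p.2 ∈ Icc 2 (k + 1) ∧ Q p} =
      #{p : V × V | G.dist p.1 p.2 ∈ Icc 2 k ∧ Q p} +
        #{p : V × V | G.dist p.1 p.2 ∈ ({k + 1} : Finset ℕ) ∧ Q p} := by
  rw [← card_union_of_disjoint]
  · congr 1
    ext p
    simp only [mem_union, mem_filter_univ, mem_Icc, mem_singleton]
    grind
  · simp only [disjoint_filter, mem_Icc, mem_singleton]
    lia

lemma card_throughPairs_Icc_succ (G : SimpleGraph V) (v : V) (hk : 1 ≤ k) :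
    #(throughPairs G v (Icc 2 (k + 1))) =
      #(throughPairs G v (Icc 2 k)) + #(throughPairs G v {k + 1}) :=
  card_filter_dist_mem_Icc_succ G hk _

lemma card_avoidingPairs_Icc_succ (G : SimpleGraph V) (v : V) (hk : 1 ≤ k) :
    #(avoidingPairs G v (Icc 2 (k + 1))) =
      #(avoidingPairs G v (Icc 2 k)) + #(avoidingPairs G v {k + 1}) :=
  card_filter_dist_mem_Icc_succ G hk _

lemma BC_succ_lt_BC (hk : 1 ≤ k)
    (h : #(throughPairs G v {k + 1}) * #(avoidingPairs G v (Icc 2 k)) <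
      #(throughPairs G v (Icc 2 k)) * #(avoidingPairs G v {k + 1})) :
    BC G (k + 1) v < BC G k v := by
  have hpos : 0 < #(throughPairs G v (Icc 2 k)) := Nat.pos_of_ne_zero fun h0 ↦ by simp [h0] at h
  rw [BC_eq_card_div, BC_eq_card_div, card_throughPairs_Icc_succ G v hk,
    card_avoidingPairs_Icc_succ G v hk, div_lt_div_iff₀ (by positivity) (by positivity)]
  norm_cast
  linarith

lemma BC_lt_BC_succ (hk : 1 ≤ k)
    (h : #(avoidingPairs G v {k + 1}) * #(throughPairs G v (Icc 2 k)) <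
      #(avoidingPairs G v (Icc 2 k)) * #(throughPairs G v {k + 1})) :
    BC G k v < BC G (k + 1) v := by
  have hpos : 0 < #(avoidingPairs G v (Icc 2 k)) :=
    Nat.pos_of_ne_zero fun h0 ↦ by simp [h0] at h
  rw [BC_eq_card_div, BC_eq_card_div, card_throughPairs_Icc_succ G v hk,
    card_avoidingPairs_Icc_succ G v hk, div_lt_div_iff₀ (by positivity) (by positivity)]
  norm_cast
  linarith

lemma BC_iso_apply (e : G ≃g G') (k : ℕ) (v : V) : BC G' k (e v) = BC G k v := by
  have hthrough : Pvtx G' k (e v) = Pvtx G k v := by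
    refine congrArg (· / 2) (card_equiv (e.toEquiv.prodCongr e.toEquiv) fun p ↦ ?_).symm
    simp [dist_iso_apply, isInterior_iso_apply]
  have htotal : Ptot G' k = Ptot G k := by
    refine congrArg (· / 2) (card_equiv (e.toEquiv.prodCongr e.toEquiv) fun p ↦ ?_).symm
    simp [dist_iso_apply]
  rw [BC, BC, hthrough, htotal]

lemma diam_eq_of_iso (e : G ≃g G') : diam G' = diam G := by
  rw [diam, ← map_univ_equiv (e.toEquiv.prodCongr e.toEquiv), sup_map]
  simp [diam, Function.comp_def, dist_iso_apply]

end Betweenness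

/-! ### Attaching pendant vertices -/

section AttachLeaves

variable {W L : Type*}

/-- The graph obtained from `G` by adding, for every `l : L`, a pendant vertex `Sum.inr l` whose
only neighbour is the vertex `Sum.inl (h l)` of `G`. -/
def attachLeaves (G : SimpleGraph W) (h : L → W) : SimpleGraph (W ⊕ L) where
  Adj
    | .inl x, .inl y => G.Adj x y
    | .inl x, .inr l => h l = x
    | .inr l, .inl x => h l = x
    | .inr _, .inr _ => False
  symm := ⟨by rintro (x | l) (y | l') h <;> first | exact h | exact h.symm⟩
  loopless := ⟨by rintro (x | l) h <;> first | exact h | exact G.irrefl h⟩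

namespace attachLeaves

variable {G : SimpleGraph W} {h : L → W}

@[simp]
lemma adj_inl_inl {x y : W} : (attachLeaves G h).Adj (.inl x) (.inl y) ↔ G.Adj x y := .rfl

@[simp]
lemma adj_inl_inr {x : W} {l : L} : (attachLeaves G h).Adj (.inl x) (.inr l) ↔ h l = x := .rfl

@[simp]
lemma adj_inr_inl {l : L} {x : W} : (attachLeaves G h).Adj (.inr l) (.inl x) ↔ h l = x := .rfl

@[simp]
lemma not_adj_inr_inr {l l' : L} : ¬ (attachLeaves G h).Adj (.inr l) (.inr l') := id

lemma adj_inr_iff {l : L} {x : W ⊕ L} :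
    (attachLeaves G h).Adj (.inr l) x ↔ x = .inl (h l) := by
  cases x <;> simp [eq_comm]

/-- The inclusion of `G` as a graph homomorphism, along which walks in `G` are transported. -/
def inlHom (G : SimpleGraph W) (h : L → W) : G →g attachLeaves G h := ⟨Sum.inl, id⟩

lemma connected (hG : G.Connected) : (attachLeaves G h).Connected := by
  obtain ⟨x₀⟩ := hG.nonempty
  have hinl (x : W) : (attachLeaves G h).Reachable (.inl x₀) (.inl x) :=
    (hG.preconnected x₀ x).map (inlHom G h)
  refine (connected_iff_exists_forall_reachable _).2 ⟨.inl x₀, ?_⟩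
  rintro (x | l)
  · exact hinl x
  · exact (hinl (h l)).trans (adj_inl_inr.2 rfl).reachable

lemma edgeSet_eq : (attachLeaves G h).edgeSet =
    Sym2.map Sum.inl '' G.edgeSet ∪ Set.range fun l ↦ s(Sum.inr l, Sum.inl (h l)) := by
  ext e
  induction e with | h x y => ?_
  simp only [mem_edgeSet, Set.mem_union, Set.mem_image, Set.mem_range, Sym2.exists]
  rcases x with x | l <;> rcases y with y | l'
  · simp only [adj_inl_inl, Sym2.map_mk, Sym2.eq, Sym2.rel_iff', Prod.mk.injEq, Sum.inl.injEq,
      Prod.swap_prod_mk, reduceCtorEq, false_and, or_self, exists_false, or_false]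
    grind [G.adj_comm]
  · simp
  · simp
  · simp

lemma isTree [Finite W] [Finite L] (hG : G.IsTree) : (attachLeaves G h).IsTree := by
  refine isTree_of_connected_of_card_edgeSet_lt (connected hG.connected) ?_
  have hcard := (isTree_iff_connected_and_card.1 hG).2
  have hsplit := Set.ncard_union_le (Sym2.map (Sum.inl : W → W ⊕ L) '' G.edgeSet)
    (Set.range fun l ↦ s(Sum.inr l, Sum.inl (h l)))
  have hold : (Sym2.map (Sum.inl : W → W ⊕ L) '' G.edgeSet).ncard ≤ Nat.card G.edgeSet :=
    Set.ncard_image_le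
  have hnew : (Set.range fun l ↦ s(Sum.inr l, Sum.inl (h l))).ncard ≤ Nat.card L :=
    Finite.card_range_le _
  rw [Nat.card_sum, Nat.card_coe_set_eq, edgeSet_eq]
  lia

lemma dist_inl_inl (hG : G.Connected) (x y : W) :
    (attachLeaves G h).dist (.inl x) (.inl y) = G.dist x y := by
  refine le_antisymm (dist_map_le (inlHom G h) (hG.preconnected x y)) ?_
  have hlip : ∀ u w, (attachLeaves G h).Adj u w →
      G.dist (u.elim id h) y ≤ G.dist (w.elim id h) y + 1 := by
    rintro (u | l) (w | l') huw
    · have := hG.dist_triangle (u := u) (v := w) (w := y)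
      rw [dist_eq_one_iff_adj.2 (adj_inl_inl.1 huw)] at this
      simpa [add_comm] using this
    all_goals simp_all
  simpa using le_add_dist_of_forall_adj hlip
    ((connected hG).preconnected (.inl x) (.inl y))

lemma dist_inr (hG : G.Connected) {l : L} {x : W ⊕ L} (hx : .inr l ≠ x) :
    (attachLeaves G h).dist (.inr l) x = (attachLeaves G h).dist (.inl (h l)) x + 1 :=
  dist_eq_dist_add_one_of_forall_adj_eq (connected hG) (adj_inr_iff.2 rfl)
    (fun _ ↦ adj_inr_iff.1) hx

lemma dist_inr_inl (hG : G.Connected) (l : L) (x : W) :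
    (attachLeaves G h).dist (.inr l) (.inl x) = G.dist (h l) x + 1 := by
  rw [dist_inr hG Sum.inr_ne_inl, dist_inl_inl hG]

lemma dist_inl_inr (hG : G.Connected) (x : W) (l : L) :
    (attachLeaves G h).dist (.inl x) (.inr l) = G.dist x (h l) + 1 := by
  rw [SimpleGraph.dist_comm, dist_inr_inl hG, SimpleGraph.dist_comm]

lemma dist_inr_inr (hG : G.Connected) {l l' : L} (hl : l ≠ l') :
    (attachLeaves G h).dist (.inr l) (.inr l') = G.dist (h l) (h l') + 2 := by
  rw [dist_inr hG (Sum.inr_injective.ne hl), dist_inl_inr hG]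

lemma diam_eq [Fintype W] [Fintype L] (hG : G.Connected) {l l' : L} (hl : l ≠ l')
    (hmax : ∀ x y, G.dist x y ≤ G.dist (h l) (h l')) :
    diam (attachLeaves G h) = G.dist (h l) (h l') + 2 := by
  refine le_antisymm (Finset.sup_le ?_) ?_
  · rintro ⟨x | j, y | j'⟩ -
    · have := hmax x y
      simp only [dist_inl_inl hG]
      lia
    · have := hmax x (h j')
      simp only [dist_inl_inr hG]
      lia
    · have := hmax (h j) y
      simp only [dist_inr_inl hG]
      lia
    · obtain rfl | hj := eq_or_ne j j'
      · simp
      · simpa only [dist_inr_inr hG hj] using Nat.add_le_add_right (hmax (h j) (h j')) 2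
  · rw [← dist_inr_inr hG hl]
    exact le_sup (f := fun p : (W ⊕ L) × (W ⊕ L) ↦ (attachLeaves G h).dist p.1 p.2)
      (mem_univ (.inr l, .inr l'))

end attachLeaves

lemma isInterior_attachLeaves_inl_inr_inr {G : SimpleGraph W} {h : L → W} (hG : G.Connected)
    {v : W} {l l' : L} :
    IsInterior (attachLeaves G h) (.inl v) (.inr l) (.inr l') ↔
      l ≠ l' ∧ IsBetween G v (h l) (h l') := by
  obtain rfl | hl := eq_or_ne l l'
  · simp [IsInterior, attachLeaves.dist_inr_inl hG]
  · simp only [IsInterior, IsBetween, attachLeaves.dist_inr_inl hG, attachLeaves.dist_inl_inr hG,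
      attachLeaves.dist_inr_inr hG hl, ne_eq, reduceCtorEq, not_false_eq_true, true_and, hl]
    lia

end AttachLeaves

/-! ### Blowing up a set of hubs -/

section LeafBlowup

variable {W : Type*}

/-- The graph `G` with `m` pendant vertices `Sum.inr (a, j)`, `j : Fin m`, attached to every hub
`a ∈ H`. -/
abbrev leafBlowup (G : SimpleGraph W) (H : Finset W) (m : ℕ) : SimpleGraph (W ⊕ H × Fin m) :=
  attachLeaves G fun l ↦ l.1

variable {G : SimpleGraph W} {H : Finset W} {m k : ℕ} {v : W} {D : Finset ℕ}

lemma sq_le_card_of_forall_inr_inr_mem {S : Finset ((W ⊕ H × Fin m) × (W ⊕ H × Fin m))} (a b : H)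
    (hS : ∀ j j', (.inr (a, j), .inr (b, j')) ∈ S) : m ^ 2 ≤ #S := by
  calc m ^ 2 = #(univ : Finset (Fin m × Fin m)) := by simp [sq]
    _ ≤ #S := card_le_card_of_injOn (fun q ↦ (.inr (a, q.1), .inr (b, q.2)))
        (fun q _ ↦ hS q.1 q.2) (fun q _ q' _ h ↦ by simpa [Prod.ext_iff] using h)

variable [Fintype W]

lemma card_leafBlowup_le : Fintype.card (W ⊕ H × Fin m) ≤ Fintype.card W * (m + 1) := by
  have hH : #H * m ≤ Fintype.card W * m := Nat.mul_le_mul_right m (card_le_univ H)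
  simp only [Fintype.card_sum, Fintype.card_prod, Fintype.card_coe, Fintype.card_fin]
  lia

lemma card_pairs_le_sq (S : Finset ((W ⊕ H × Fin m) × (W ⊕ H × Fin m))) :
    #S ≤ (Fintype.card W * (m + 1)) ^ 2 := by
  calc #S ≤ Fintype.card (W ⊕ H × Fin m) ^ 2 := by
        rw [sq, ← Fintype.card_prod]
        exact card_le_univ S
    _ ≤ (Fintype.card W * (m + 1)) ^ 2 := Nat.pow_le_pow_left card_leafBlowup_le 2

lemma card_le_of_forall_inr_inr_notMem {S : Finset ((W ⊕ H × Fin m) × (W ⊕ H × Fin m))}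
    (hS : ∀ l l', (.inr l, .inr l') ∉ S) : #S ≤ 2 * Fintype.card W ^ 2 * (m + 1) := by
  have hsub : S ⊆ univ.map .inl ×ˢ univ ∪ univ ×ˢ univ.map .inl := by
    rintro ⟨x | l, y | l'⟩ hp <;> simp_all
  calc #S ≤ #((univ : Finset W).map (.inl : W ↪ W ⊕ H × Fin m) ×ˢ (univ : Finset (W ⊕ H × Fin m)))
        + #((univ : Finset (W ⊕ H × Fin m)) ×ˢ (univ : Finset W).map .inl) :=
        (card_le_card hsub).trans (card_union_le _ _)
    _ = 2 * Fintype.card W * Fintype.card (W ⊕ H × Fin m) := by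
        simp only [card_product, card_map, card_univ]
        ring
    _ ≤ 2 * Fintype.card W * (Fintype.card W * (m + 1)) :=
        Nat.mul_le_mul_left _ card_leafBlowup_le
    _ = 2 * Fintype.card W ^ 2 * (m + 1) := by ring

lemma sq_le_card_throughPairs_leafBlowup (hG : G.Connected) {a b : W} (ha : a ∈ H)
    (hb : b ∈ H) (hab : a ≠ b) (hv : IsBetween G v a b) (hD : G.dist a b + 2 ∈ D) :
    m ^ 2 ≤ #(throughPairs (leafBlowup G H m) (.inl v) D) := by
  refine sq_le_card_of_forall_inr_inr_mem ⟨a, ha⟩ ⟨b, hb⟩ fun j j' ↦ ?_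
  have hne : ((⟨a, ha⟩, j) : H × Fin m) ≠ (⟨b, hb⟩, j') := by simp [hab]
  simp [throughPairs, attachLeaves.dist_inr_inr hG hne, isInterior_attachLeaves_inl_inr_inr hG,
    hab, hv, hD]

lemma sq_le_card_avoidingPairs_leafBlowup (hG : G.Connected) {a b : W} (ha : a ∈ H)
    (hb : b ∈ H) (hab : a ≠ b) (hv : ¬ IsBetween G v a b) (hD : G.dist a b + 2 ∈ D) :
    m ^ 2 ≤ #(avoidingPairs (leafBlowup G H m) (.inl v) D) := by
  refine sq_le_card_of_forall_inr_inr_mem ⟨a, ha⟩ ⟨b, hb⟩ fun j j' ↦ ?_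
  have hne : ((⟨a, ha⟩, j) : H × Fin m) ≠ (⟨b, hb⟩, j') := by simp [hab]
  simp [avoidingPairs, attachLeaves.dist_inr_inr hG hne, isInterior_attachLeaves_inl_inr_inr hG,
    hv, hD]

lemma card_throughPairs_leafBlowup_le (hG : G.Connected)
    (hD : ∀ a ∈ H, ∀ b ∈ H, IsBetween G v a b → G.dist a b + 2 ∉ D) :
    #(throughPairs (leafBlowup G H m) (.inl v) D) ≤ 2 * Fintype.card W ^ 2 * (m + 1) := by
  refine card_le_of_forall_inr_inr_notMem fun l l' hmem ↦ ?_
  obtain ⟨hdist, hint⟩ := mem_filter_univ _ |>.1 hmem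
  obtain ⟨hne, hv⟩ := (isInterior_attachLeaves_inl_inr_inr hG).1 hint
  rw [attachLeaves.dist_inr_inr hG hne] at hdist
  exact hD _ l.1.2 _ l'.1.2 hv hdist

lemma card_avoidingPairs_leafBlowup_le (hG : G.Connected) (hD₀ : 0 ∉ D)
    (hD : ∀ a ∈ H, ∀ b ∈ H, ¬ IsBetween G v a b → G.dist a b + 2 ∉ D) :
    #(avoidingPairs (leafBlowup G H m) (.inl v) D) ≤ 2 * Fintype.card W ^ 2 * (m + 1) := by
  refine card_le_of_forall_inr_inr_notMem fun l l' hmem ↦ ?_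
  obtain ⟨hdist, hint⟩ := mem_filter_univ _ |>.1 hmem
  have hne : l ≠ l' := by
    rintro rfl
    exact hD₀ (by simpa using hdist)
  rw [attachLeaves.dist_inr_inr hG hne] at hdist
  exact hD _ l.1.2 _ l'.1.2 (fun hv ↦ hint ((isInterior_attachLeaves_inl_inr_inr hG).2 ⟨hne, hv⟩))
    hdist

lemma mul_lt_mul_of_linear_of_quadratic {n m a b A B : ℕ} (hm : 16 * n ^ 4 < m)
    (ha : a ≤ 2 * n ^ 2 * (m + 1)) (hb : b ≤ (n * (m + 1)) ^ 2) (hA : m ^ 2 ≤ A)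
    (hB : m ^ 2 ≤ B) : a * b < A * B := by
  calc a * b ≤ (2 * n ^ 2 * (m + 1)) * (n * (m + 1)) ^ 2 := Nat.mul_le_mul ha hb
    _ = 2 * n ^ 4 * (m + 1) ^ 3 := by ring
    _ ≤ 2 * n ^ 4 * (2 * m) ^ 3 := by gcongr; lia
    _ = 16 * n ^ 4 * m ^ 3 := by ring
    _ < m * m ^ 3 := Nat.mul_lt_mul_of_pos_right hm (Nat.pow_pos (by lia))
    _ = m ^ 2 * m ^ 2 := by ring
    _ ≤ A * B := Nat.mul_le_mul hA hB

theorem BC_leafBlowup_succ_lt (hG : G.Connected) (hm : 16 * Fintype.card W ^ 4 < m)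
    {a b c d : W} (ha : a ∈ H) (hb : b ∈ H) (hab : a ≠ b) (hvab : IsBetween G v a b)
    (hkab : G.dist a b + 2 ≤ k) (hc : c ∈ H) (hd : d ∈ H) (hcd : c ≠ d)
    (hvcd : ¬ IsBetween G v c d) (hkcd : G.dist c d + 2 = k + 1)
    (hH : ∀ x ∈ H, ∀ y ∈ H, IsBetween G v x y → G.dist x y + 2 ≠ k + 1) :
    BC (leafBlowup G H m) (k + 1) (.inl v) < BC (leafBlowup G H m) k (.inl v) :=
  BC_succ_lt_BC (by lia) <| mul_lt_mul_of_linear_of_quadratic hm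
    (card_throughPairs_leafBlowup_le hG (by simpa using hH)) (card_pairs_le_sq _)
    (sq_le_card_throughPairs_leafBlowup hG ha hb hab hvab (by simpa using hkab))
    (sq_le_card_avoidingPairs_leafBlowup hG hc hd hcd hvcd (by simpa using hkcd))

theorem BC_leafBlowup_lt_succ (hG : G.Connected) (hm : 16 * Fintype.card W ^ 4 < m)
    {a b c d : W} (ha : a ∈ H) (hb : b ∈ H) (hab : a ≠ b) (hvab : ¬ IsBetween G v a b)
    (hkab : G.dist a b + 2 ≤ k) (hc : c ∈ H) (hd : d ∈ H) (hcd : c ≠ d)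
    (hvcd : IsBetween G v c d) (hkcd : G.dist c d + 2 = k + 1)
    (hH : ∀ x ∈ H, ∀ y ∈ H, ¬ IsBetween G v x y → G.dist x y + 2 ≠ k + 1) :
    BC (leafBlowup G H m) k (.inl v) < BC (leafBlowup G H m) (k + 1) (.inl v) :=
  BC_lt_BC_succ (by lia) <| mul_lt_mul_of_linear_of_quadratic hm
    (card_avoidingPairs_leafBlowup_le hG (by simp) (by simpa using hH)) (card_pairs_le_sq _)
    (sq_le_card_avoidingPairs_leafBlowup hG ha hb hab hvab (by simpa using hkab))
    (sq_le_card_throughPairs_leafBlowup hG hc hd hcd hvcd (by simpa using hkcd))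

end LeafBlowup

/-! ### The caterpillar -/

section Caterpillar

/-- The hubs of the caterpillar on the spine `0, 1, …, 6i + 2`. -/
def hubs (i : ℕ) : Finset (Fin (6 * i + 2 + 1)) :=
  {x | x.val = 0 ∨ x.val % 6 = 2 ∨ x.val % 6 = 3}

/-- The caterpillar with `m` pendant vertices at every hub. -/
abbrev caterpillar (i m : ℕ) : SimpleGraph (Fin (6 * i + 2 + 1) ⊕ hubs i × Fin m) :=
  leafBlowup (pathGraph (6 * i + 2 + 1)) (hubs i) m

variable {i m r : ℕ}

lemma mem_hubs {x : Fin (6 * i + 2 + 1)} :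
    x ∈ hubs i ↔ x.val = 0 ∨ x.val % 6 = 2 ∨ x.val % 6 = 3 := by
  simp [hubs]

lemma diam_caterpillar (hm : 0 < m) : diam (caterpillar i m) = 6 * i + 4 := by
  have hlast : Fin.last (6 * i + 2) ∈ hubs i := mem_hubs.2 (.inr (.inl (by simp)))
  have hzero : 0 ∈ hubs i := mem_hubs.2 (.inl rfl)
  rw [attachLeaves.diam_eq (pathGraph_connected _) (l := (⟨0, hzero⟩, ⟨0, hm⟩))
    (l' := (⟨Fin.last _, hlast⟩, ⟨0, hm⟩)) (by simp [Fin.ext_iff])]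
  · simp [dist_pathGraph, Nat.dist]
  · intro x y
    simp only [dist_pathGraph, Nat.dist, Fin.val_zero, Fin.val_last]
    lia

lemma dist_mod_six_of_isBetween_one {x y : Fin (6 * i + 2 + 1)} (hx : x ∈ hubs i)
    (hy : y ∈ hubs i) (h : IsBetween (pathGraph _) 1 x y) :
    (pathGraph _).dist x y % 6 = 2 ∨ (pathGraph _).dist x y % 6 = 3 := by
  have hone : ((1 : Fin (6 * i + 2 + 1)) : ℕ) = 1 := by simp
  rw [mem_hubs] at hx hy
  rw [isBetween_pathGraph_iff] at h
  simp only [Fin.le_def, hone] at h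
  simp only [dist_pathGraph, Nat.dist]
  lia

lemma dist_mod_six_of_not_isBetween_one {x y : Fin (6 * i + 2 + 1)} (hx : x ∈ hubs i)
    (hy : y ∈ hubs i) (h : ¬ IsBetween (pathGraph _) 1 x y) :
    (pathGraph _).dist x y % 6 = 0 ∨ (pathGraph _).dist x y % 6 = 1 ∨
      (pathGraph _).dist x y % 6 = 5 := by
  have hone : ((1 : Fin (6 * i + 2 + 1)) : ℕ) = 1 := by simp
  rw [mem_hubs] at hx hy
  rw [isBetween_pathGraph_iff] at h
  simp only [Fin.le_def, hone] at h
  simp only [dist_pathGraph, Nat.dist]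
  lia

lemma BC_caterpillar_succ_lt (hm : 16 * (6 * i + 3) ^ 4 < m) (hr : 1 ≤ r) (hri : r < i) :
    BC (caterpillar i m) (6 * r + 3) (.inl 1) < BC (caterpillar i m) (6 * r + 2) (.inl 1) := by
  have hH (x) (hx : x ∈ hubs i) (y) (hy : y ∈ hubs i) (h : IsBetween (pathGraph _) 1 x y) :
      (pathGraph _).dist x y + 2 ≠ 6 * r + 3 := by
    have := dist_mod_six_of_isBetween_one hx hy h
    lia
  have hone : ((1 : Fin (6 * i + 2 + 1)) : ℕ) = 1 := by simp
  refine BC_leafBlowup_succ_lt (pathGraph_connected _) (by simpa using hm)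
    (a := 0) (b := ⟨2, by lia⟩) (c := ⟨2, by lia⟩) (d := ⟨6 * r + 3, by lia⟩)
    ?_ ?_ ?_ ?_ ?_ ?_ ?_ ?_ ?_ ?_ hH
  all_goals
    simp only [mem_hubs, isBetween_pathGraph_iff, dist_pathGraph, Nat.dist, Fin.le_def, ne_eq,
      Fin.ext_iff, Fin.val_zero, hone]
    lia

lemma BC_caterpillar_lt_succ (hm : 16 * (6 * i + 3) ^ 4 < m) (hri : r < i) :
    BC (caterpillar i m) (6 * r + 3) (.inl 1) < BC (caterpillar i m) (6 * r + 4) (.inl 1) := by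
  have hH (x) (hx : x ∈ hubs i) (y) (hy : y ∈ hubs i) (h : ¬ IsBetween (pathGraph _) 1 x y) :
      (pathGraph _).dist x y + 2 ≠ 6 * r + 4 := by
    have := dist_mod_six_of_not_isBetween_one hx hy h
    lia
  have hone : ((1 : Fin (6 * i + 2 + 1)) : ℕ) = 1 := by simp
  refine BC_leafBlowup_lt_succ (pathGraph_connected _) (by simpa using hm)
    (a := ⟨2, by lia⟩) (b := ⟨3, by lia⟩) (c := 0) (d := ⟨6 * r + 2, by lia⟩)
    ?_ ?_ ?_ ?_ ?_ ?_ ?_ ?_ ?_ ?_ hH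
  all_goals
    simp only [mem_hubs, isBetween_pathGraph_iff, dist_pathGraph, Nat.dist, Fin.le_def, ne_eq,
      Fin.ext_iff, Fin.val_zero, hone]
    lia

end Caterpillar

theorem exists_tree_with_many_dips_general (i : ℕ) :
    ∃ (N : ℕ) (G : SimpleGraph (Fin N)) (v : Fin N), G.IsTree ∧ diam G = 6 * i + 4 ∧
      ∀ r : ℕ, 1 ≤ r → r < i →
        BC G (6 * r + 2) v > BC G (6 * r + 3) v ∧ BC G (6 * r + 3) v < BC G (6 * r + 4) v := by
  obtain ⟨m, hm⟩ := exists_gt (16 * (6 * i + 3) ^ 4)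
  let e := (caterpillar i m).overFinIso rfl
  refine ⟨_, _, e (.inl 1), e.isTree_iff.1 (attachLeaves.isTree (isTree_pathGraph _)), ?_,
    fun r hr hri ↦ ?_⟩
  · rw [diam_eq_of_iso e, diam_caterpillar (by lia)]
  · simp only [BC_iso_apply]
    exact ⟨BC_caterpillar_succ_lt hm hr hri, BC_caterpillar_lt_succ hm hri⟩

/-- For any `i ≥ 3` there is a tree of diameter `6i + 4` and a vertex `v` whose
profile has a dip at `6r + 3` for every `2 ≤ r ≤ i - 1` (hence at least `i - 2` dips,
while the diameter is `Θ(i)`). -/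
theorem exists_tree_with_many_dips (i : ℕ) (hi : 3 ≤ i) :
    ∃ (N : ℕ) (G : SimpleGraph (Fin N)) (v : Fin N), G.IsTree ∧ diam G = 6 * i + 4 ∧
      ∀ r : ℕ, 2 ≤ r → r ≤ i - 1 →
        BC G (6*r+2) v > BC G (6*r+3) v ∧ BC G (6*r+3) v < BC G (6*r+4) v := by
  obtain ⟨N, G, v, htree, hdiam, hdip⟩ := exists_tree_with_many_dips_general i
  exact ⟨N, G, v, htree, hdiam, fun r hr hri ↦ hdip r (by lia) (by lia)⟩
end

section
/- For every real ε > 0 there exists an integer d₀ such that for every integer d ≥ d₀ there exist a finite tree T of diameter exactly d and a vertex v of T with BC_d(v) > 0 such that for every integer k with 2 ≤ k < d, BC_k(v) < ε · BC_d(v). -/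
open scoped Classical

/-!
Blow up both ends of a path of length `d` into `m` leaves each, and let `v` be a vertex of the path
at distance at least `2` from all leaves. It lies between all `m ^ 2` pairs of leaves at opposite
ends, so `BC_d(v)` stays bounded below as `m → ∞`. Such pairs have distance exactly `d`, and two
leaves at the same end are joined through a vertex other than `v`. So for `2 ≤ k < d` every pair
counted by `P_k(v)` involves one of the `d - 1` inner vertices of the path; there are `O(d m)` of
these pairs, whereas the leaves at one end alone give `P_k ≥ m.choose 2`.
-/

theorem IsInterior.symm {V : Type*} {G : SimpleGraph V} {v s t : V} (h : IsInterior G v s t) :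
    IsInterior G v t s := by
  obtain ⟨hs, ht, hdist⟩ := h
  refine ⟨ht, hs, ?_⟩
  rw [G.dist_comm (u := t) (v := v), G.dist_comm (u := v) (v := s), G.dist_comm (u := t) (v := s),
    add_comm, hdist]

section CountingPairs

variable {V : Type*} [Fintype V] {G : SimpleGraph V} {k : ℕ} {v : V}

theorem Ptot_le_choose_two (G : SimpleGraph V) (k : ℕ) :
    Ptot G k ≤ (Fintype.card V).choose 2 := by
  rw [Ptot, Nat.choose_two_right, Nat.mul_sub_one, ← Finset.card_univ, ← Finset.offDiag_card]
  refine Nat.div_le_div_right (Finset.card_le_card fun ⟨s, t⟩ hst => ?_)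
  simp only [Finset.mem_filter, Finset.mem_univ, true_and, Finset.mem_offDiag] at hst ⊢
  rintro rfl
  simp at hst

theorem choose_two_le_Ptot (S : Finset V)
    (hS : ∀ s ∈ S, ∀ t ∈ S, s ≠ t → 2 ≤ G.dist s t ∧ G.dist s t ≤ k) :
    S.card.choose 2 ≤ Ptot G k := by
  rw [Ptot, Nat.choose_two_right, Nat.mul_sub_one, ← Finset.offDiag_card]
  refine Nat.div_le_div_right (Finset.card_le_card fun ⟨s, t⟩ hst => ?_)
  obtain ⟨hs, ht, hne⟩ := Finset.mem_offDiag.mp hst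
  simpa using hS s hs t ht hne

theorem card_mul_card_le_Pvtx {S T : Finset V} (hdisj : Disjoint S T)
    (hST : ∀ s ∈ S, ∀ t ∈ T, 2 ≤ G.dist s t ∧ G.dist s t ≤ k ∧ IsInterior G v s t) :
    S.card * T.card ≤ Pvtx G k v := by
  have hdisj' : Disjoint (S ×ˢ T) (T ×ˢ S) := Finset.disjoint_product.mpr (.inl hdisj)
  have hcard : (S ×ˢ T ∪ T ×ˢ S).card = S.card * T.card * 2 := by
    rw [Finset.card_union_of_disjoint hdisj', Finset.card_product, Finset.card_product]
    ring
  rw [Pvtx, Nat.le_div_iff_mul_le two_pos, ← hcard]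
  refine Finset.card_le_card fun ⟨s, t⟩ hst => ?_
  simp only [Finset.mem_union, Finset.mem_product, Finset.mem_filter, Finset.mem_univ,
    true_and] at hst ⊢
  rcases hst with ⟨hs, ht⟩ | ⟨ht, hs⟩
  · exact hST s hs t ht
  · obtain ⟨htwo, hk, hint⟩ := hST t hs s ht
    rw [G.dist_comm]
    exact ⟨htwo, hk, hint.symm⟩

theorem Pvtx_le_card_mul_card (A : Finset V)
    (hA : ∀ s t, G.dist s t ≤ k → IsInterior G v s t → s ∈ A ∨ t ∈ A) :
    Pvtx G k v ≤ A.card * Fintype.card V := by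
  rw [Pvtx]
  refine Nat.div_le_of_le_mul ?_
  calc _ ≤ (A ×ˢ Finset.univ ∪ Finset.univ ×ˢ A).card :=
        Finset.card_le_card fun ⟨s, t⟩ hst => by
          simp only [Finset.mem_filter, Finset.mem_univ, true_and] at hst
          simpa using hA s t hst.2.1 hst.2.2
    _ ≤ (A ×ˢ Finset.univ).card + (Finset.univ ×ˢ A).card := Finset.card_union_le _ _
    _ = 2 * (A.card * Fintype.card V) := by
        rw [Finset.card_product, Finset.card_product, Finset.card_univ]
        ring

end CountingPairs

section GraphTheory

variable {V W : Type*} {G : SimpleGraph W} {f : V → W} {x y : V}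

theorem isAcyclic_of_subsingleton_adj_le {α : Type*} [LinearOrder α] {H : SimpleGraph V}
    (height : V → α) (hH : ∀ u, {w | H.Adj u w ∧ height w ≤ height u}.Subsingleton) :
    H.IsAcyclic := by
  intro u c hc
  -- A vertex of maximal height on a cycle has two distinct neighbours that are not higher.
  obtain ⟨top, htop, hmax⟩ := c.support.toFinset.exists_max_image height ⟨u, by simp⟩
  rw [List.mem_toFinset] at htop
  let c' := c.rotate top htop
  have hc' : c'.IsCycle := hc.rotate htop
  have hle : ∀ w ∈ c'.support, height w ≤ height top := fun w hw =>
    hmax w (by simpa [c'] using hw)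
  exact hc'.snd_ne_penultimate <| hH top
    ⟨c'.adj_snd hc'.not_nil, hle _ (c'.getVert_mem_support 1)⟩
    ⟨(c'.adj_penultimate hc'.not_nil).symm, hle _ (c'.getVert_mem_support _)⟩

theorem exists_walk_comap_length_eq (hf : f.Surjective) {a b : W} (p : G.Walk a b)
    (hp : ¬ p.Nil) (hx : f x = a) (hy : f y = b) :
    ∃ q : (G.comap f).Walk x y, q.length = p.length := by
  induction p generalizing x with
  | nil => exact absurd .nil hp
  | @cons a c b hac p ih =>
    subst hx hy
    by_cases hpn : p.Nil
    · obtain rfl := hpn.eq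
      exact ⟨.cons (SimpleGraph.comap_adj.mpr hac) .nil,
        by simp [SimpleGraph.Walk.length_eq_zero_iff.mpr hpn]⟩
    · obtain ⟨z, rfl⟩ := hf c
      obtain ⟨q, hq⟩ := ih hpn rfl rfl
      exact ⟨.cons (SimpleGraph.comap_adj.mpr hac) q, by simp [hq]⟩

theorem edist_comap_of_ne (hf : f.Surjective) (hxy : f x ≠ f y) :
    (G.comap f).edist x y = G.edist (f x) (f y) := by
  refine le_antisymm (le_iInf fun p => ?_) (le_iInf fun q => ?_)
  · obtain ⟨q, hq⟩ := exists_walk_comap_length_eq hf p (p.not_nil_of_ne hxy) rfl rfl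
    exact hq ▸ q.edist_le
  · let toG : G.comap f →g G := ⟨f, id⟩
    exact (q.map toG).edist_le.trans_eq (by rw [SimpleGraph.Walk.length_map])

theorem dist_comap_of_ne (hf : f.Surjective) (hxy : f x ≠ f y) :
    (G.comap f).dist x y = G.dist (f x) (f y) :=
  congrArg ENat.toNat (edist_comap_of_ne hf hxy)

theorem edist_comap_of_eq [Nontrivial W] (hG : G.Preconnected) (hf : f.Surjective) (hne : x ≠ y)
    (hxy : f x = f y) : (G.comap f).edist x y = 2 := by
  obtain ⟨w, hw⟩ := hG.exists_adj_of_nontrivial (f x)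
  obtain ⟨z, rfl⟩ := hf w
  exact SimpleGraph.edist_eq_two_iff.mpr
    ⟨hne, by simp [hxy], z, hw, by simpa [hxy] using hw⟩

theorem dist_comap_of_eq [Nontrivial W] (hG : G.Preconnected) (hf : f.Surjective) (hne : x ≠ y)
    (hxy : f x = f y) : (G.comap f).dist x y = 2 :=
  congrArg ENat.toNat (edist_comap_of_eq hG hf hne hxy)

theorem connected_comap [Nontrivial W] (hG : G.Connected) (hf : f.Surjective) :
    (G.comap f).Connected := by
  have : Nonempty V := hf.nonempty
  refine ⟨fun x y => ?_⟩
  by_cases hne : x = y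
  · exact hne ▸ .rfl
  refine SimpleGraph.reachable_of_edist_ne_top ?_
  by_cases hxy : f x = f y
  · simp [edist_comap_of_eq hG.preconnected hf hne hxy]
  · rw [edist_comap_of_ne hf hxy]
    exact SimpleGraph.edist_ne_top_iff_reachable.mpr (hG (f x) (f y))

end GraphTheory

section PathGraph

variable {n : ℕ}

theorem natAbs_sub_le_length_pathGraph {i j : Fin n} (p : (SimpleGraph.pathGraph n).Walk i j) :
    ((i : ℤ) - j).natAbs ≤ p.length := by
  induction p with
  | nil => simp
  | cons h p ih =>
    rw [SimpleGraph.pathGraph_adj] at h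
    rw [SimpleGraph.Walk.length_cons]
    omega

theorem exists_walk_pathGraph_length_eq {l : ℕ} {i j : Fin n} (hij : (i : ℕ) + l = j) :
    ∃ p : (SimpleGraph.pathGraph n).Walk i j, p.length = l := by
  induction l generalizing i with
  | zero =>
    obtain rfl : i = j := Fin.ext hij
    exact ⟨.nil, rfl⟩
  | succ l ih =>
    let next : Fin n := ⟨i + 1, by omega⟩
    have hadj : (SimpleGraph.pathGraph n).Adj i next := SimpleGraph.pathGraph_adj.mpr (.inl rfl)
    obtain ⟨p, hp⟩ := ih (i := next) (by dsimp only [next]; omega)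
    exact ⟨.cons hadj p, by rw [SimpleGraph.Walk.length_cons, hp]⟩

theorem dist_pathGraph_s5 (i j : Fin n) :
    (SimpleGraph.pathGraph n).dist i j = ((i : ℤ) - j).natAbs := by
  wlog hij : i ≤ j generalizing i j
  · rw [SimpleGraph.dist_comm, this j i (le_of_not_ge hij)]
    omega
  obtain ⟨p, hp⟩ := exists_walk_pathGraph_length_eq (Nat.add_sub_cancel' hij)
  obtain ⟨q, hq⟩ := p.reachable.exists_walk_length_eq_dist
  have hle := SimpleGraph.dist_le p
  have hge := natAbs_sub_le_length_pathGraph q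
  omega

end PathGraph

section DoubleBroom

variable {m d : ℕ}

/-- The position along the spine of a vertex of the double broom: the `m` vertices at level `0` and
the `m` vertices at level `d` are its leaves, and each level strictly in between has one vertex.
Subtraction is truncated, so that `i < m` lies at level `0`. -/
def broomLevel (m d : ℕ) (i : Fin (2 * m + d - 1)) : Fin (d + 1) :=
  ⟨min d (i + 1 - m), by omega⟩

/-- The double broom: a path of length `d` whose two end vertices have been blown up into `m`
leaves each. -/
def doubleBroom (m d : ℕ) : SimpleGraph (Fin (2 * m + d - 1)) :=
  (SimpleGraph.pathGraph (d + 1)).comap (broomLevel m d)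

theorem val_broomLevel (i : Fin (2 * m + d - 1)) :
    (broomLevel m d i : ℕ) = min d (i + 1 - m) := rfl

theorem broomLevel_surjective (hm : 1 ≤ m) : (broomLevel m d).Surjective := fun ℓ =>
  ⟨⟨m - 1 + ℓ, by omega⟩, Fin.ext (by rw [val_broomLevel]; dsimp only; omega)⟩

theorem eq_of_broomLevel_eq {i j : Fin (2 * m + d - 1)}
    (hij : (broomLevel m d i : ℕ) = broomLevel m d j) (hpos : 0 < (broomLevel m d i : ℕ))
    (hlt : (broomLevel m d i : ℕ) < d) : i = j := by
  rw [val_broomLevel] at hij hpos hlt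
  rw [val_broomLevel] at hij
  omega

theorem doubleBroom_adj {i j : Fin (2 * m + d - 1)} : (doubleBroom m d).Adj i j ↔
    (broomLevel m d i : ℕ) + 1 = broomLevel m d j ∨
      (broomLevel m d j : ℕ) + 1 = broomLevel m d i :=
  SimpleGraph.pathGraph_adj

theorem dist_doubleBroom_of_ne (hm : 1 ≤ m) {i j : Fin (2 * m + d - 1)}
    (hij : broomLevel m d i ≠ broomLevel m d j) :
    (doubleBroom m d).dist i j = ((broomLevel m d i : ℤ) - broomLevel m d j).natAbs :=
  (dist_comap_of_ne (broomLevel_surjective hm) hij).trans (dist_pathGraph_s5 _ _)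

theorem dist_doubleBroom_of_eq (hm : 1 ≤ m) (hd : 1 ≤ d) {i j : Fin (2 * m + d - 1)}
    (hne : i ≠ j) (hij : broomLevel m d i = broomLevel m d j) :
    (doubleBroom m d).dist i j = 2 := by
  have : Nontrivial (Fin (d + 1)) := Fin.nontrivial_iff_two_le.mpr (by omega)
  exact dist_comap_of_eq (SimpleGraph.pathGraph_preconnected _) (broomLevel_surjective hm) hne hij

theorem dist_doubleBroom_le_two (hm : 1 ≤ m) (hd : 1 ≤ d) {i j : Fin (2 * m + d - 1)}
    (hij : broomLevel m d i = broomLevel m d j) : (doubleBroom m d).dist i j ≤ 2 := by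
  by_cases hne : i = j
  · simp [hne]
  · exact (dist_doubleBroom_of_eq hm hd hne hij).le

theorem isAcyclic_doubleBroom (hd : 2 ≤ d) : (doubleBroom m d).IsAcyclic := by
  -- Rooting the broom at its only vertex of level 1 makes the leaves of level 0 its children.
  refine isAcyclic_of_subsingleton_adj_le
    (fun i => ((broomLevel m d i : ℤ) - 1).natAbs) fun i a ⟨hia, ha⟩ b ⟨hib, hb⟩ => ?_
  rw [doubleBroom_adj] at hia hib
  have hi := (broomLevel m d i).is_le
  exact eq_of_broomLevel_eq (m := m) (d := d) (by omega) (by omega) (by omega)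

theorem isTree_doubleBroom (hm : 1 ≤ m) (hd : 2 ≤ d) : (doubleBroom m d).IsTree := by
  have : Nontrivial (Fin (d + 1)) := Fin.nontrivial_iff_two_le.mpr (by omega)
  exact ⟨connected_comap (SimpleGraph.pathGraph_connected d) (broomLevel_surjective hm),
    isAcyclic_doubleBroom hd⟩

theorem dist_doubleBroom_le (hm : 1 ≤ m) (hd : 2 ≤ d) (i j : Fin (2 * m + d - 1)) :
    (doubleBroom m d).dist i j ≤ d := by
  by_cases hij : broomLevel m d i = broomLevel m d j
  · exact (dist_doubleBroom_le_two hm (by omega) hij).trans hd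
  · have hi := (broomLevel m d i).is_le
    have hj := (broomLevel m d j).is_le
    rw [dist_doubleBroom_of_ne hm hij]
    omega

theorem dist_doubleBroom_of_zero_of_last (hm : 1 ≤ m) (hd : 1 ≤ d) {i j : Fin (2 * m + d - 1)}
    (hi : broomLevel m d i = 0) (hj : broomLevel m d j = Fin.last d) :
    (doubleBroom m d).dist i j = d := by
  have hij : broomLevel m d i ≠ broomLevel m d j := by
    rw [hi, hj, Ne, Fin.ext_iff, Fin.val_zero, Fin.val_last]
    omega
  simp [dist_doubleBroom_of_ne hm hij, hi, hj]

theorem diam_doubleBroom (hm : 1 ≤ m) (hd : 2 ≤ d) : diam (doubleBroom m d) = d := by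
  refine le_antisymm (Finset.sup_le fun p _ => dist_doubleBroom_le hm hd p.1 p.2) ?_
  obtain ⟨i, hi⟩ := broomLevel_surjective (d := d) hm 0
  obtain ⟨j, hj⟩ := broomLevel_surjective hm (Fin.last d)
  calc d = (doubleBroom m d).dist i j :=
        (dist_doubleBroom_of_zero_of_last hm (by omega) hi hj).symm
    _ ≤ diam (doubleBroom m d) :=
        Finset.le_sup (f := fun p : _ × _ => (doubleBroom m d).dist p.1 p.2)
          (Finset.mem_univ (i, j))

theorem card_broomLevel_eq_zero (hm : 1 ≤ m) (hd : 1 ≤ d) :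
    (Finset.univ.filter fun i => broomLevel m d i = 0).card = m := by
  have hN : m < 2 * m + d - 1 := by omega
  have hcard : (Finset.Iio (⟨m, hN⟩ : Fin (2 * m + d - 1))).card = m := Fin.card_Iio _
  refine Eq.trans ?_ hcard
  congr 1
  ext i
  simp only [Finset.mem_filter, Finset.mem_univ, true_and, Finset.mem_Iio, Fin.ext_iff,
    Fin.lt_def, val_broomLevel, Fin.val_zero]
  omega

theorem card_broomLevel_eq_last (hm : 1 ≤ m) (hd : 1 ≤ d) :
    (Finset.univ.filter fun i => broomLevel m d i = Fin.last d).card = m := by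
  have hN : m + d - 1 < 2 * m + d - 1 := by omega
  have hcard : (Finset.Ici (⟨m + d - 1, hN⟩ : Fin (2 * m + d - 1))).card = m := by
    rw [Fin.card_Ici]
    dsimp only
    omega
  refine Eq.trans ?_ hcard
  congr 1
  ext i
  simp only [Finset.mem_filter, Finset.mem_univ, true_and, Finset.mem_Ici, Fin.ext_iff,
    Fin.le_def, val_broomLevel, Fin.val_last]
  omega

theorem card_broomLevel_ne_zero_ne_last (hm : 1 ≤ m) (hd : 1 ≤ d) :
    (Finset.univ.filter fun i =>
      broomLevel m d i ≠ 0 ∧ broomLevel m d i ≠ Fin.last d).card = d - 1 := by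
  have hlt : m < 2 * m + d - 1 := by omega
  have hlt' : m + d - 1 < 2 * m + d - 1 := by omega
  have hcard : (Finset.Ico (⟨m, hlt⟩ : Fin (2 * m + d - 1)) ⟨m + d - 1, hlt'⟩).card = d - 1 := by
    rw [Fin.card_Ico]
    dsimp only
    omega
  refine Eq.trans ?_ hcard
  congr 1
  ext i
  simp only [Finset.mem_filter, Finset.mem_univ, true_and, Finset.mem_Ico, Ne, Fin.ext_iff,
    Fin.le_def, Fin.lt_def, val_broomLevel, Fin.val_zero, Fin.val_last]
  omega

theorem choose_two_le_Ptot_doubleBroom (hm : 1 ≤ m) (hd : 1 ≤ d) {k : ℕ} (hk : 2 ≤ k) :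
    m.choose 2 ≤ Ptot (doubleBroom m d) k := by
  have hleaves : (Finset.univ.filter fun i => broomLevel m d i = 0).card.choose 2 ≤
      Ptot (doubleBroom m d) k := by
    refine choose_two_le_Ptot _ fun s hs t ht hne => ?_
    simp only [Finset.mem_filter, Finset.mem_univ, true_and] at hs ht
    simpa [dist_doubleBroom_of_eq hm hd hne (hs.trans ht.symm)] using hk
  rwa [card_broomLevel_eq_zero hm hd] at hleaves

variable {v : Fin (2 * m + d - 1)}

theorem isInterior_doubleBroom (hm : 1 ≤ m) {s t : Fin (2 * m + d - 1)}
    (hsv : broomLevel m d s < broomLevel m d v) (hvt : broomLevel m d v < broomLevel m d t) :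
    IsInterior (doubleBroom m d) v s t := by
  refine ⟨fun h => hsv.ne' (h ▸ rfl), fun h => hvt.ne (h ▸ rfl), ?_⟩
  rw [dist_doubleBroom_of_ne hm hsv.ne, dist_doubleBroom_of_ne hm hvt.ne,
    dist_doubleBroom_of_ne hm (hsv.trans hvt).ne]
  rw [Fin.lt_def] at hsv hvt
  omega

theorem sq_le_Pvtx_doubleBroom (hm : 1 ≤ m) (hpos : 0 < (broomLevel m d v : ℕ))
    (hlt : (broomLevel m d v : ℕ) < d) : m ^ 2 ≤ Pvtx (doubleBroom m d) d v := by
  have hdisj : Disjoint (Finset.univ.filter fun i => broomLevel m d i = 0)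
      (Finset.univ.filter fun i => broomLevel m d i = Fin.last d) :=
    Finset.disjoint_filter.mpr fun i _ hzero hlast => by
      simp only [Fin.ext_iff, Fin.val_zero, Fin.val_last] at hzero hlast
      omega
  have hleaves := card_mul_card_le_Pvtx (G := doubleBroom m d) (k := d) (v := v) hdisj
    fun s hs t ht => by
      simp only [Finset.mem_filter, Finset.mem_univ, true_and] at hs ht
      rw [dist_doubleBroom_of_zero_of_last hm (by omega) hs ht]
      exact ⟨by omega, le_rfl, isInterior_doubleBroom hm (hs ▸ hpos) (ht ▸ hlt)⟩
  rwa [card_broomLevel_eq_zero hm (by omega), card_broomLevel_eq_last hm (by omega), ← sq]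
    at hleaves

theorem dist_eq_of_isInterior_doubleBroom (hm : 1 ≤ m) (hv : 2 ≤ (broomLevel m d v : ℕ))
    (hv' : (broomLevel m d v : ℕ) + 2 ≤ d) {s t : Fin (2 * m + d - 1)}
    (hs : broomLevel m d s = 0 ∨ broomLevel m d s = Fin.last d)
    (ht : broomLevel m d t = 0 ∨ broomLevel m d t = Fin.last d)
    (hint : IsInterior (doubleBroom m d) v s t) : (doubleBroom m d).dist s t = d := by
  obtain ⟨-, -, hdist⟩ := hint
  simp only [Fin.ext_iff, Fin.val_zero, Fin.val_last] at hs ht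
  have hsv := dist_doubleBroom_of_ne hm (i := s) (j := v) (by rw [Ne, Fin.ext_iff]; omega)
  have hvt := dist_doubleBroom_of_ne hm (i := v) (j := t) (by rw [Ne, Fin.ext_iff]; omega)
  have hst : broomLevel m d s ≠ broomLevel m d t := fun heq => by
    have := dist_doubleBroom_le_two hm (by omega) heq
    omega
  rw [dist_doubleBroom_of_ne hm hst]
  rw [Ne, Fin.ext_iff] at hst
  omega

theorem Pvtx_doubleBroom_le (hm : 1 ≤ m) (hv : 2 ≤ (broomLevel m d v : ℕ))
    (hv' : (broomLevel m d v : ℕ) + 2 ≤ d) {k : ℕ} (hk : k < d) :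
    Pvtx (doubleBroom m d) k v ≤ (d - 1) * (2 * m + d - 1) := by
  rw [← card_broomLevel_ne_zero_ne_last (d := d) hm (by omega)]
  refine (Pvtx_le_card_mul_card _ fun s t hst hint => ?_).trans_eq (by rw [Fintype.card_fin])
  by_contra hends
  simp only [Finset.mem_filter, Finset.mem_univ, true_and, not_or, not_and_or, not_not] at hends
  have := dist_eq_of_isInterior_doubleBroom hm hv hv' hends.1 hends.2 hint
  omega

theorem two_ninths_le_BC_doubleBroom (hm : 2 ≤ m) (hpos : 0 < (broomLevel m d v : ℕ))
    (hlt : (broomLevel m d v : ℕ) < d) (hdm : d ≤ m + 1) :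
    2 / 9 ≤ BC (doubleBroom m d) d v := by
  have hPvtx : (m : ℝ) ^ 2 ≤ Pvtx (doubleBroom m d) d v :=
    mod_cast sq_le_Pvtx_doubleBroom (by omega) hpos hlt
  have hPtot_pos : 0 < (Ptot (doubleBroom m d) d : ℝ) :=
    mod_cast (Nat.choose_pos hm).trans_le
      (choose_two_le_Ptot_doubleBroom (by omega) (by omega) (by omega))
  have hN : Fintype.card (Fin (2 * m + d - 1)) ≤ 3 * m := by
    rw [Fintype.card_fin]
    omega
  have hPtot_le : (Ptot (doubleBroom m d) d : ℝ) ≤ 9 / 2 * (m : ℝ) ^ 2 :=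
    calc (Ptot (doubleBroom m d) d : ℝ) ≤ (3 * m).choose 2 :=
          mod_cast (Ptot_le_choose_two _ d).trans (Nat.choose_le_choose 2 hN)
      _ = 3 * m * (3 * m - 1) / 2 := by rw [Nat.cast_choose_two]; push_cast; rfl
      _ ≤ 9 / 2 * (m : ℝ) ^ 2 := by
          have : (0 : ℝ) ≤ m := m.cast_nonneg
          linarith
  rw [BC, le_div_iff₀ hPtot_pos]
  linarith

theorem BC_doubleBroom_le (hv : 2 ≤ (broomLevel m d v : ℕ))
    (hv' : (broomLevel m d v : ℕ) + 2 ≤ d) (hdm : d ≤ m + 1) {k : ℕ} (hk : 2 ≤ k) (hkd : k < d) :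
    BC (doubleBroom m d) k v ≤ 6 * d / (m - 1) := by
  have hm : (1 : ℝ) < m := Nat.one_lt_cast.mpr (by omega)
  have hPvtx : (Pvtx (doubleBroom m d) k v : ℝ) ≤ d * (3 * m) :=
    mod_cast (Pvtx_doubleBroom_le (by omega) hv hv' hkd).trans
      (Nat.mul_le_mul (Nat.sub_le d 1) (by omega))
  have hPtot : (m : ℝ) * (m - 1) / 2 ≤ Ptot (doubleBroom m d) k := by
    rw [← Nat.cast_choose_two]
    exact_mod_cast choose_two_le_Ptot_doubleBroom (by omega) (by omega) hk
  have hpos : 0 < (m : ℝ) * (m - 1) / 2 := by nlinarith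
  calc BC (doubleBroom m d) k v ≤ d * (3 * m) / (m * (m - 1) / 2) :=
        div_le_div₀ (by positivity) hPvtx hpos hPtot
    _ = 6 * d / (m - 1) := by
        have : (m : ℝ) - 1 ≠ 0 := by linarith
        field_simp
        ring

end DoubleBroom

theorem BC_k_can_be_much_smaller_general {d : ℕ} (hd : 4 ≤ d) {ε : ℝ} (hε : 0 < ε) :
    ∃ (N : ℕ) (G : SimpleGraph (Fin N)) (v : Fin N), G.IsTree ∧ diam G = d ∧
      0 < BC G d v ∧ ∀ k : ℕ, 2 ≤ k → k < d → BC G k v < ε * BC G d v := by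
  obtain ⟨n, hn⟩ := exists_nat_gt (27 * d / ε)
  obtain ⟨m, hm⟩ : ∃ m, m = n + d := ⟨_, rfl⟩
  have hm_pos : 1 ≤ m := by omega
  obtain ⟨v, hv⟩ := broomLevel_surjective hm_pos (⟨2, by omega⟩ : Fin (d + 1))
  have hlevel : (broomLevel m d v : ℕ) = 2 := congrArg Fin.val hv
  have hBC : 2 / 9 ≤ BC (doubleBroom m d) d v :=
    two_ninths_le_BC_doubleBroom (by omega) (by omega) (by omega) (by omega)
  refine ⟨_, doubleBroom m d, v, isTree_doubleBroom hm_pos (by omega),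
    diam_doubleBroom hm_pos (by omega), by linarith, fun k hk hkd => ?_⟩
  have hn_lt : (n : ℝ) < m - 1 := by
    have : (4 : ℝ) ≤ d := mod_cast hd
    rw [hm, Nat.cast_add]
    linarith
  calc BC (doubleBroom m d) k v ≤ 6 * d / (m - 1) :=
        BC_doubleBroom_le (by omega) (by omega) (by omega) hk hkd
    _ < ε * (2 / 9) := by
        rw [div_lt_iff₀ (n.cast_nonneg.trans_lt hn_lt)]
        linarith [(div_lt_iff₀' hε).mp (hn.trans hn_lt)]
    _ ≤ ε * BC (doubleBroom m d) d v := by gcongr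

/-- `k`-betweenness centralities can be arbitrarily small relative to betweenness
centrality: for every `ε > 0` and every large enough diameter `d` there are a tree of
diameter `d` and a vertex `v` with `BC_k(v) < ε · BC_d(v)` for every `2 ≤ k < d`. -/
theorem BC_k_can_be_much_smaller (ε : ℝ) (hε : 0 < ε) :
    ∃ d₀ : ℕ, ∀ d : ℕ, d₀ ≤ d →
      ∃ (N : ℕ) (G : SimpleGraph (Fin N)) (v : Fin N), G.IsTree ∧ diam G = d ∧
        0 < BC G d v ∧ ∀ k : ℕ, 2 ≤ k → k < d → BC G k v < ε * BC G d v :=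
  ⟨4, fun _ hd => BC_k_can_be_much_smaller_general hd hε⟩
end

section
/- In the path graph of length n (n ≥ 2), for every vertex i and every integer k with 2 ≤ k < n, BC_k(i) ≤ BC_{k+1}(i); that is, the profile of every vertex of a simple path is monotonically non-decreasing in k. -/
/-- `pathPk n k i` : number of pairs `(s,t)` with `0 ≤ s < t ≤ n`, `2 ≤ t - s ≤ k`,
and `s < i < t`, i.e. the number of paths of length between 2 and `k` in the path graph
of length `n` containing the vertex `i` as an interior vertex. -/
def pathPk (n k i : ℕ) : ℕ :=
  ((Finset.range (n+1) ×ˢ Finset.range (n+1)).filter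
    (fun p => p.1 < p.2 ∧ 2 ≤ p.2 - p.1 ∧ p.2 - p.1 ≤ k ∧ p.1 < i ∧ i < p.2)).card

/-- `pathPtot n k` : number of pairs `(s,t)` with `0 ≤ s < t ≤ n` and `2 ≤ t - s ≤ k`. -/
def pathPtot (n k : ℕ) : ℕ :=
  ((Finset.range (n+1) ×ˢ Finset.range (n+1)).filter
    (fun p => p.1 < p.2 ∧ 2 ≤ p.2 - p.1 ∧ p.2 - p.1 ≤ k)).card

/-- The normalized `k`-betweenness centrality of vertex `i` in the path graph of length `n`. -/
noncomputable def pathBC (n k i : ℕ) : ℝ :=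
  (pathPk n k i : ℝ) / (pathPtot n k : ℝ)

/-!
For `1 ≤ l ≤ n`, exactly `n + 1 - l` pairs are at distance `l`. Among them, `min (f l) (n + 1 - l)`
have `i` in their interior, where `f l = min (min i (n - i)) (l - 1)` is non-decreasing in `l`. The
proportion of pairs at distance `l` around `i` is therefore `min (f l / (n + 1 - l)) 1`, which is
non-decreasing in `l`. Since `BC_k(i)` is the average of these proportions over `2 ≤ l ≤ k`,
weighted by `n + 1 - l`, allowing longer distances cannot decrease it.
-/

theorem min_mul_le_min_mul {R : Type*} [CommSemiring R] [LinearOrder R] [IsOrderedRing R]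
    {a a' b b' : R} (ha : a ≤ a') (hb : b' ≤ b) (ha' : 0 ≤ a') (hb' : 0 ≤ b') :
    min a b * b' ≤ min a' b' * b := by
  rw [min_mul_of_nonneg _ _ hb', min_mul_of_nonneg _ _ (hb'.trans hb), mul_comm b b']
  exact min_le_min_right _ (mul_le_mul ha hb hb' ha')

theorem sum_mul_sum_le_of_subset {ι R : Type*} [CommSemiring R] [PartialOrder R]
    [IsOrderedAddMonoid R] [DecidableEq ι] {s t : Finset ι} {f g : ι → R} (hst : s ⊆ t)
    (hfg : ∀ i ∈ s, ∀ j ∈ t \ s, f i * g j ≤ f j * g i) :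
    (∑ i ∈ s, f i) * ∑ i ∈ t, g i ≤ (∑ i ∈ t, f i) * ∑ i ∈ s, g i := by
  have cross : (∑ i ∈ s, f i) * ∑ j ∈ t \ s, g j ≤ (∑ j ∈ t \ s, f j) * ∑ i ∈ s, g i := by
    rw [Finset.sum_mul_sum, Finset.sum_mul_sum, Finset.sum_comm (s := t \ s)]
    exact Finset.sum_le_sum fun i hi => Finset.sum_le_sum fun j hj => hfg i hi j hj
  rw [← Finset.sum_sdiff hst, ← Finset.sum_sdiff (f := f) hst, mul_add, add_mul]
  gcongr

theorem card_filter_dist_le_eq_sum (n k : ℕ) (Q : ℕ → ℕ → Prop) [∀ s t, Decidable (Q s t)] :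
    ((Finset.range (n + 1) ×ˢ Finset.range (n + 1)).filter
      (fun p => p.1 < p.2 ∧ 2 ≤ p.2 - p.1 ∧ p.2 - p.1 ≤ k ∧ Q p.1 p.2)).card =
      ∑ l ∈ Finset.Icc 2 k, ((Finset.range (n + 1 - l)).filter (fun s => Q s (s + l))).card := by
  rw [← Finset.card_sigma]
  refine Finset.card_nbij' (fun p => ⟨p.2 - p.1, p.1⟩) (fun x => (x.2, x.2 + x.1)) ?_ ?_ ?_ ?_
  · rintro ⟨s, t⟩ hst
    simp only [Finset.mem_coe, Finset.mem_filter, Finset.mem_product, Finset.mem_range] at hst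
    obtain ⟨_, hlt, _, _, hQ⟩ := hst
    simp only [Finset.mem_coe, Finset.mem_sigma, Finset.mem_Icc, Finset.mem_filter,
      Finset.mem_range, Nat.add_sub_cancel' hlt.le]
    exact ⟨by omega, by omega, hQ⟩
  · rintro ⟨l, s⟩ hls
    simp only [Finset.mem_coe, Finset.mem_sigma, Finset.mem_Icc, Finset.mem_filter,
      Finset.mem_range] at hls
    obtain ⟨_, _, hQ⟩ := hls
    simp only [Finset.mem_coe, Finset.mem_filter, Finset.mem_product, Finset.mem_range]
    exact ⟨by omega, by omega, by omega, by omega, hQ⟩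
  · rintro ⟨s, t⟩ hst
    have hlt : s < t := (Finset.mem_filter.1 hst).2.1
    simp only [Nat.add_sub_cancel' hlt.le]
  · rintro ⟨l, s⟩ _
    simp only [Nat.add_sub_cancel_left]

theorem card_filter_interior (n l i : ℕ) :
    ((Finset.range (n + 1 - l)).filter (fun s => s < i ∧ i < s + l)).card =
      min (min (min i (n - i)) (l - 1)) (n + 1 - l) := by
  have interval : (Finset.range (n + 1 - l)).filter (fun s => s < i ∧ i < s + l) =
      Finset.Ico (i + 1 - l) (min i (n + 1 - l)) := by
    ext s
    simp only [Finset.mem_filter, Finset.mem_range, Finset.mem_Ico]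
    omega
  rw [interval, Nat.card_Ico]
  omega

theorem pathPk_eq_sum (n k i : ℕ) :
    pathPk n k i = ∑ l ∈ Finset.Icc 2 k, min (min (min i (n - i)) (l - 1)) (n + 1 - l) := by
  simp only [← card_filter_interior]
  exact card_filter_dist_le_eq_sum n k fun s t => s < i ∧ i < t

theorem pathPtot_eq_sum (n k : ℕ) : pathPtot n k = ∑ l ∈ Finset.Icc 2 k, (n + 1 - l) := by
  simpa [pathPtot] using card_filter_dist_le_eq_sum n k fun _ _ => True

theorem pathPtot_pos {n k : ℕ} (hn : 2 ≤ n) (hk : 2 ≤ k) : 0 < pathPtot n k := by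
  rw [pathPtot_eq_sum]
  exact Finset.sum_pos' (fun _ _ => Nat.zero_le _)
    ⟨2, Finset.left_mem_Icc.2 hk, Nat.sub_pos_of_lt (Nat.lt_succ_of_le hn)⟩

theorem pathPk_mul_pathPtot_le {k m : ℕ} (hkm : k ≤ m) (n i : ℕ) :
    pathPk n k i * pathPtot n m ≤ pathPk n m i * pathPtot n k := by
  simp only [pathPk_eq_sum, pathPtot_eq_sum]
  refine sum_mul_sum_le_of_subset (Finset.Icc_subset_Icc_right hkm) fun j hj l hl => ?_
  have hjl : j ≤ l := by
    simp only [Finset.mem_sdiff, Finset.mem_Icc] at hj hl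
    omega
  exact min_mul_le_min_mul (by gcongr) (by gcongr) (Nat.zero_le _) (Nat.zero_le _)

/-- In the path graph of length `n ≥ 2`, the profile of every vertex is monotonically
non-decreasing in `k`. -/
theorem path_profile_monotone (n i k : ℕ) (hn : 2 ≤ n) (hi : i ≤ n)
    (hk : 2 ≤ k) (hkn : k < n) :
    pathBC n k i ≤ pathBC n (k+1) i := by
  have hPk : (0 : ℝ) < pathPtot n k := by exact_mod_cast pathPtot_pos hn hk
  have hPk1 : (0 : ℝ) < pathPtot n (k + 1) := by
    exact_mod_cast pathPtot_pos hn (hk.trans k.le_succ)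
  rw [pathBC, pathBC, div_le_div_iff₀ hPk hPk1]
  exact_mod_cast pathPk_mul_pathPtot_le k.le_succ n i
end

section
/- In the path graph of length n (n ≥ 2), profiles of vertices do not cross: for any two vertices u and v, either BC_k(u) ≤ BC_k(v) for all integers k with 2 ≤ k ≤ n, or BC_k(v) ≤ BC_k(u) for all integers k with 2 ≤ k ≤ n. -/
/-!
For `u ≤ v` with `u + v ≤ n`, the reflection `x ↦ u + v - x` swaps `u` and `v` and carries every
segment of the path that contains `u` but not `v` in its interior to a segment of the same length
that contains `v` but not `u`, without leaving the path. So `P_k` increases towards the middle of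
the path. Together with the symmetry `i ↦ n - i` of the whole path, this makes `P_k(i)` a
nondecreasing function of the distance from `i` to the nearer endpoint. That distance does not
depend on `k`, so it orders all vertices in the same way for every `k`.
-/

open Finset

/-- The pairs counted by `pathPk n k i`: endpoints `(s, t)` of the segments of length at most `k`
having `i` as an interior vertex. The bound `t - s ≤ k` is written without subtraction, and
`2 ≤ t - s` is implied by `s < i < t`. -/
def interiorPairs (n k i : ℕ) : Finset (ℕ × ℕ) :=
  {p ∈ range (n + 1) ×ˢ range (n + 1) | p.1 < i ∧ i < p.2 ∧ p.2 ≤ p.1 + k}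

/-- The image of the segment with endpoints `p` under the reflection `x ↦ c - x`. Subtraction is
truncated, so this is a reflection only for segments contained in `[0, c]`. -/
def reflectPair (c : ℕ) (p : ℕ × ℕ) : ℕ × ℕ :=
  (c - p.2, c - p.1)

/-- The distance from the vertex `i` to the nearer endpoint of the path graph of length `n`
(for `i ≤ n`). -/
def endDist (n i : ℕ) : ℕ :=
  min i (n - i)

section

variable {n k c i u v : ℕ} {p : ℕ × ℕ}

theorem mem_interiorPairs :
    p ∈ interiorPairs n k i ↔ p.1 < i ∧ i < p.2 ∧ p.2 ≤ n ∧ p.2 ≤ p.1 + k := by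
  simp only [interiorPairs, mem_filter, mem_product, mem_range]
  omega

theorem pathPk_eq_card_interiorPairs (n k i : ℕ) : pathPk n k i = #(interiorPairs n k i) :=
  congrArg card (filter_congr fun p _ => by omega)

theorem reflectPair_reflectPair (h₁ : p.1 ≤ c) (h₂ : p.2 ≤ c) :
    reflectPair c (reflectPair c p) = p :=
  Prod.ext (Nat.sub_sub_self h₁) (Nat.sub_sub_self h₂)

theorem reflectPair_mem_interiorPairs (hp : p ∈ interiorPairs n k i) (hpc : p.2 ≤ c)
    (hcn : c ≤ n + p.1) : reflectPair c p ∈ interiorPairs n k (c - i) := by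
  simp only [mem_interiorPairs, reflectPair] at hp ⊢
  omega

theorem pathPk_sub (hi : i ≤ n) : pathPk n k (n - i) = pathPk n k i := by
  have reflect_mem {j : ℕ} : ∀ p ∈ interiorPairs n k j,
      reflectPair n p ∈ interiorPairs n k (n - j) := fun p hp =>
    reflectPair_mem_interiorPairs hp (mem_interiorPairs.1 hp).2.2.1 (Nat.le_add_right n p.1)
  have reflect_reflect {j : ℕ} : ∀ p ∈ interiorPairs n k j,
      reflectPair n (reflectPair n p) = p := fun p hp => by
    rw [mem_interiorPairs] at hp
    exact reflectPair_reflectPair (by omega) (by omega)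
  rw [pathPk_eq_card_interiorPairs, pathPk_eq_card_interiorPairs]
  refine card_nbij' (reflectPair n) (reflectPair n) (fun p hp => ?_) reflect_mem
    reflect_reflect reflect_reflect
  simpa only [mem_coe, Nat.sub_sub_self hi] using reflect_mem p hp

theorem pathPk_le_pathPk_of_add_le (huv : u ≤ v) (hn : u + v ≤ n) :
    pathPk n k u ≤ pathPk n k v := by
  rw [pathPk_eq_card_interiorPairs, pathPk_eq_card_interiorPairs, ← card_sdiff_le_card_sdiff_iff]
  have snd_le : ∀ p ∈ interiorPairs n k u \ interiorPairs n k v, p.2 ≤ v := fun p hp => by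
    simp only [mem_sdiff, mem_interiorPairs] at hp
    omega
  refine card_le_card_of_injOn (reflectPair (u + v)) (fun p hp => ?_)
    (Set.LeftInvOn.injOn (f₁' := reflectPair (u + v)) fun p hp => ?_)
  · have hpv : p.2 ≤ v := snd_le p hp
    refine mem_sdiff.2 ⟨?_, fun hmem => ?_⟩
    · simpa only [Nat.add_sub_cancel_left] using
        reflectPair_mem_interiorPairs (c := u + v) (mem_sdiff.1 hp).1 (by omega) (by omega)
    · have : u + v - p.2 < u := (mem_interiorPairs.1 hmem).1
      omega
  · have hpv : p.2 ≤ v := snd_le p hp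
    have hpu := mem_interiorPairs.1 (mem_sdiff.1 hp).1
    exact reflectPair_reflectPair (by omega) (by omega)

theorem pathPk_endDist (hi : i ≤ n) : pathPk n k (endDist n i) = pathPk n k i := by
  rcases min_choice i (n - i) with h | h
  · rw [endDist, h]
  · rw [endDist, h, pathPk_sub hi]

theorem pathPk_le_pathPk_of_endDist_le (hu : u ≤ n) (hv : v ≤ n)
    (h : endDist n u ≤ endDist n v) : pathPk n k u ≤ pathPk n k v := by
  rw [← pathPk_endDist hu, ← pathPk_endDist hv]
  refine pathPk_le_pathPk_of_add_le h ?_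
  unfold endDist
  omega

theorem pathBC_le_pathBC_of_endDist_le (hu : u ≤ n) (hv : v ≤ n)
    (h : endDist n u ≤ endDist n v) : pathBC n k u ≤ pathBC n k v := by
  unfold pathBC
  gcongr
  exact pathPk_le_pathPk_of_endDist_le hu hv h

end

/-- In the path graph of length `n ≥ 2`, profiles of vertices do not cross. -/
theorem path_profiles_do_not_cross (n u v : ℕ) (hn : 2 ≤ n) (hu : u ≤ n) (hv : v ≤ n) :
    (∀ k : ℕ, 2 ≤ k → k ≤ n → pathBC n k u ≤ pathBC n k v) ∨
    (∀ k : ℕ, 2 ≤ k → k ≤ n → pathBC n k v ≤ pathBC n k u) := by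
  rcases le_total (endDist n u) (endDist n v) with h | h
  · exact Or.inl fun _ _ _ => pathBC_le_pathBC_of_endDist_le hu hv h
  · exact Or.inr fun _ _ _ => pathBC_le_pathBC_of_endDist_le hv hu h
end

section
/- In the path graph of length n, for every vertex i with 0 ≤ i ≤ ⌊n/2⌋ and every integer k with 2 ≤ k ≤ n, the number P_k(i) of pairs (s,t) with 0 ≤ s < t ≤ n, 2 ≤ t − s ≤ k, and s < i < t equals: C(k,2) if k ≤ i; C(i,2) + i(k − i) if i < k ≤ n + 1 − i; and C(i,2) + i(n − 2i + 1) + (n + 1)(k − n + i − 1) + C(n + 2 − i, 2) − C(k + 1, 2) if k > n + 1 − i. (Here C(m,2) = m(m−1)/2.) -/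
/-! Sort the pairs `(s, t)` by their length `d + 1 = t - s`. For fixed `d` the start `s` runs over
the interval `max 0 (i - d) ≤ s < min i (n - d)`. As `d` grows, the size of this interval is `d`
until `d = i`, stays at `i` until `d = n - i`, and is `n - d` from then on. Each case of the formula
adds up one more of these three regimes. -/

section Starts

variable {n i d : ℕ}

/-- The vertices `s` of the path of length `n` such that `i` is an interior vertex of the pair
`(s, s + d + 1)`. Indexing by `d` rather than by the length `d + 1` makes the lengths up to `k`
correspond to `Finset.range k`; the set is empty for `d = 0`. -/
def pathStarts (n i d : ℕ) : Finset ℕ :=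
  Finset.Ico (i - d) (min i (n - d))

theorem mem_pathStarts {s : ℕ} : s ∈ pathStarts n i d ↔ s < i ∧ i < s + d + 1 ∧ s + d + 1 ≤ n := by
  rw [pathStarts, Finset.mem_Ico]
  omega

theorem card_pathStarts_of_le_of_add_le (hdi : d ≤ i) (hn : i + d ≤ n) :
    (pathStarts n i d).card = d := by
  rw [pathStarts, Nat.card_Ico]
  omega

theorem card_pathStarts_of_ge_of_add_le (hid : i ≤ d) (hn : i + d ≤ n) :
    (pathStarts n i d).card = i := by
  rw [pathStarts, Nat.card_Ico]
  omega

theorem card_pathStarts_of_ge_of_le_add (hid : i ≤ d) (hn : n ≤ i + d) :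
    (pathStarts n i d).card = n - d := by
  rw [pathStarts, Nat.card_Ico]
  omega

end Starts

theorem cast_sum_Ico_tsub {n a b : ℕ} (hab : a ≤ b) (hbn : b ≤ n + 1) :
    ((∑ d ∈ Finset.Ico a b, (n - d) : ℕ) : ℤ) =
      (n + 1) * (b - a) + (a + 1).choose 2 - (b + 1).choose 2 := by
  induction b, hab using Nat.le_induction with
  | base => simp
  | succ b hab ih =>
    have choose_succ : (b + 1 + 1).choose 2 = (b + 1) + (b + 1).choose 2 := by
      rw [Nat.choose_succ_succ' _ 1, Nat.choose_one_right]
    rw [Finset.sum_Ico_succ_top hab, Nat.cast_add, ih (by omega), choose_succ,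
      Nat.cast_sub (by omega)]
    push_cast
    ring

section Counting

variable {n i k : ℕ}

theorem pathPk_eq_sum_card_pathStarts (n k i : ℕ) :
    pathPk n k i = ∑ d ∈ Finset.range k, (pathStarts n i d).card := by
  rw [← Finset.card_sigma, pathPk]
  refine Finset.card_nbij' (fun p => ⟨p.2 - p.1 - 1, p.1⟩) (fun q => (q.2, q.2 + q.1 + 1))
    ?_ ?_ ?_ ?_
  · rintro ⟨s, t⟩ hp
    simp only [Finset.mem_coe, Finset.mem_filter, Finset.mem_product, Finset.mem_sigma,
      Finset.mem_range, mem_pathStarts] at hp ⊢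
    omega
  · rintro ⟨d, s⟩ hq
    simp only [Finset.mem_coe, Finset.mem_filter, Finset.mem_product, Finset.mem_sigma,
      Finset.mem_range, mem_pathStarts] at hq ⊢
    omega
  · rintro ⟨s, t⟩ hp
    have hst : s < t := (Finset.mem_filter.mp hp).2.1
    exact Prod.ext rfl (by dsimp only; omega)
  · rintro ⟨d, s⟩ -
    exact Sigma.ext (by dsimp only; omega) HEq.rfl

theorem pathPk_eq_add_sum_Ico {j : ℕ} (n i : ℕ) (hjk : j ≤ k) :
    pathPk n k i = pathPk n j i + ∑ d ∈ Finset.Ico j k, (pathStarts n i d).card := by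
  simp only [pathPk_eq_sum_card_pathStarts, Finset.sum_range_add_sum_Ico _ hjk]

theorem pathPk_eq_choose_two (hki : k ≤ i) (hn : i + k ≤ n + 1) :
    pathPk n k i = k.choose 2 := by
  rw [pathPk_eq_sum_card_pathStarts, Nat.choose_two_right, ← Finset.sum_range_id]
  refine Finset.sum_congr rfl fun d hd => ?_
  have hdk : d < k := Finset.mem_range.mp hd
  exact card_pathStarts_of_le_of_add_le (by omega) (by omega)

theorem pathPk_eq_choose_two_add_mul (hik : i ≤ k) (hn : i + k ≤ n + 1) :
    pathPk n k i = i.choose 2 + i * (k - i) := by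
  have plateau : ∑ d ∈ Finset.Ico i k, (pathStarts n i d).card = ∑ _d ∈ Finset.Ico i k, i := by
    refine Finset.sum_congr rfl fun d hd => ?_
    obtain ⟨hid, hdk⟩ := Finset.mem_Ico.mp hd
    exact card_pathStarts_of_ge_of_add_le hid (by omega)
  rw [pathPk_eq_add_sum_Ico n i hik, pathPk_eq_choose_two le_rfl (by omega), plateau,
    Finset.sum_const, Nat.card_Ico, smul_eq_mul, mul_comm]

theorem pathPk_eq_choose_two_add_mul_add_sum (hi : 2 * i ≤ n + 1) (hk : n + 1 - i ≤ k) :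
    pathPk n k i =
      i.choose 2 + i * (n + 1 - 2 * i) + ∑ d ∈ Finset.Ico (n + 1 - i) k, (n - d) := by
  have descent : ∑ d ∈ Finset.Ico (n + 1 - i) k, (pathStarts n i d).card =
      ∑ d ∈ Finset.Ico (n + 1 - i) k, (n - d) := by
    refine Finset.sum_congr rfl fun d hd => ?_
    have hd_ge : n + 1 - i ≤ d := (Finset.mem_Ico.mp hd).1
    exact card_pathStarts_of_ge_of_le_add (by omega) (by omega)
  rw [pathPk_eq_add_sum_Ico n i hk, pathPk_eq_choose_two_add_mul (by omega) (by omega), descent,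
    show n + 1 - i - i = n + 1 - 2 * i by omega]

end Counting

/-- Closed form for `pathPk` in the path graph of length `n`, for `0 ≤ i ≤ ⌊n/2⌋` and
`2 ≤ k ≤ n`. -/
theorem pathPk_formula (n i k : ℕ) (hi : i ≤ n / 2) (hk2 : 2 ≤ k) (hkn : k ≤ n) :
    (k ≤ i → (pathPk n k i : ℤ) = (k.choose 2 : ℤ)) ∧
    (i < k → k ≤ n + 1 - i →
      (pathPk n k i : ℤ) = (i.choose 2 : ℤ) + (i : ℤ) * ((k : ℤ) - (i : ℤ))) ∧
    (n + 1 - i < k →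
      (pathPk n k i : ℤ) = (i.choose 2 : ℤ) + (i : ℤ) * ((n : ℤ) - 2*(i : ℤ) + 1)
        + ((n : ℤ) + 1) * ((k : ℤ) - (n : ℤ) + (i : ℤ) - 1)
        + ((n + 2 - i).choose 2 : ℤ) - ((k+1).choose 2 : ℤ)) := by
  refine ⟨fun hki => ?_, fun hik hk => ?_, fun hk => ?_⟩
  · rw [pathPk_eq_choose_two hki (by omega)]
  · rw [pathPk_eq_choose_two_add_mul hik.le (by omega)]
    push_cast [hik.le]
    ring
  · rw [pathPk_eq_choose_two_add_mul_add_sum (by omega) hk.le, Nat.cast_add,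
      cast_sum_Ico_tsub hk.le (by omega), show n + 1 - i + 1 = n + 2 - i by omega]
    push_cast [show 2 * i ≤ n + 1 by omega, show i ≤ n + 1 by omega]
    ring
end

section
/- Let i ≥ 3 and j ≥ 5. In the tree G_{i,j}, for every integer r with 2 ≤ r ≤ i−1 and every integer k with r(j+1)+4 ≤ k ≤ (r+1)j + r − 1, the number of unordered pairs of vertices at distance exactly k equals −9k + i(9j − 3) + 6j + 12r + 11. -/
open scoped Classical

/-- Vertex type of the tree `G_{i,j}`: the central path `c_0, …, c_{i(j+1)+2}`
(encoded as `Sum.inl`), plus `2i` branches of length `j` (encoded as `Sum.inr (r, side, p)`,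
the vertex at distance `p + 1` along branch `side` attached at `c_{r(j+1)+3}`). -/
abbrev GijVertex (i j : ℕ) : Type := Fin (i*(j+1)+3) ⊕ (Fin i × Bool × Fin j)

/-- The base relation generating the edges of `G_{i,j}`. -/
def GijRel (i j : ℕ) : GijVertex i j → GijVertex i j → Prop
  | Sum.inl a, Sum.inl b => a.val + 1 = b.val
  | Sum.inl a, Sum.inr (r, _, p) => p.val = 0 ∧ a.val = r.val * (j+1) + 3
  | Sum.inr (r, s, p), Sum.inr (r', s', p') => r = r' ∧ s = s' ∧ p.val + 1 = p'.val
  | _, _ => False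

/-- The tree `G_{i,j}`: a central path of length `i(j+1)+2`, with two disjoint branches
(paths) of length `j` attached at the central vertex `c_{r(j+1)+3}` for each
`r = 0, 1, …, i-1`. -/
def Gij (i j : ℕ) : SimpleGraph (GijVertex i j) := SimpleGraph.fromRel (GijRel i j)

/-- The central-path vertex `c_a` of `G_{i,j}`. -/
def Gijc (i j a : ℕ) (h : a < i*(j+1)+3) : GijVertex i j := Sum.inl ⟨a, h⟩

open scoped Classical in
/-- `pexact G k` : the number of unordered pairs `{s,t}` of vertices at distance exactly
`k` (counted as ordered pairs and divided by two). -/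
noncomputable def pexact {V : Type*} [Fintype V] (G : SimpleGraph V) (k : ℕ) : ℕ :=
  (Finset.univ.filter (fun p : V × V => G.dist p.1 p.2 = k)).card / 2

/-!
Every vertex hangs at some height `h` above its foot `c_f` on the central path. Two vertices with
feet `f < f'` and heights `h`, `h'` are at distance `(f' + h') - (f - h)`, while two vertices with
the same foot are at distance at most `2j`. So for `k > 2j` the unordered pairs at distance `k` are
the solutions of `R(v) = L(u) + k`, where `L = f - h` and `R = f + h`, and their number is
`∑ x, #L⁻¹(x) * #R⁻¹(x + k)`.

Unfolding the branches to one side makes them fill the gaps between consecutive junctions: away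
from the ends of the path both fibres have size `1` at the junctions `x ≡ 3 (mod j + 1)` and `3`
elsewhere, while `#L⁻¹(x) = 2` for the `j - 3` positions that stick out beyond `c_0`. It remains to
count the junctions in three intervals.
-/

section General

theorem abs_sub_le_length_of_adj {V : Type*} {G : SimpleGraph V} {φ : V → ℤ}
    (hφ : ∀ x y, G.Adj x y → |φ x - φ y| ≤ 1) {u v : V} (p : G.Walk u v) :
    |φ u - φ v| ≤ p.length := by
  induction p with
  | nil => simp
  | @cons u w v huw p ih =>
    calc |φ u - φ v| ≤ |φ u - φ w| + |φ w - φ v| := abs_sub_le _ _ _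
      _ ≤ 1 + p.length := add_le_add (hφ u w huw) ih
      _ = (p.cons huw).length := by rw [SimpleGraph.Walk.length_cons]; push_cast; ring

theorem abs_sub_le_dist_of_adj {V : Type*} {G : SimpleGraph V} {φ : V → ℤ}
    (hφ : ∀ x y, G.Adj x y → |φ x - φ y| ≤ 1) {u v : V} (huv : G.Reachable u v) :
    |φ u - φ v| ≤ G.dist u v := by
  obtain ⟨p, hp⟩ := huv.exists_walk_length_eq_dist
  exact hp ▸ abs_sub_le_length_of_adj hφ p

open Finset

theorem card_filter_eq_add_eq_sum {α β M : Type*} [Fintype α] [Fintype β] [Add M] [DecidableEq M]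
    (f : α → M) (g : β → M) (k : M) {s : Finset M} (hs : ∀ a b, g b = f a + k → f a ∈ s) :
    #{p : α × β | g p.2 = f p.1 + k} = ∑ x ∈ s, #{a | f a = x} * #{b | g b = x + k} := by
  rw [card_eq_sum_card_fiberwise (f := fun p ↦ f p.1) (t := s)
    fun p hp ↦ hs p.1 p.2 (mem_filter.1 hp).2]
  refine sum_congr rfl fun x _ ↦ ?_
  rw [← card_product]
  congr 1
  ext ⟨a, b⟩
  simp only [mem_filter, mem_univ, true_and, mem_product]
  constructor
  · rintro ⟨hb, rfl⟩
    exact ⟨rfl, hb⟩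
  · rintro ⟨rfl, hb⟩
    exact ⟨hb, rfl⟩

theorem card_filter_fin_cast_eq_one {n : ℕ} {y : ℤ} (hy : 0 ≤ y) (hyn : y < n) :
    #{a : Fin n | (a : ℤ) = y} = 1 := by
  lift y to ℕ using hy
  refine card_eq_one.2 ⟨⟨y, by lia⟩, ?_⟩
  ext a
  simp [Fin.ext_iff]

theorem card_filter_fin_cast_eq_zero {n : ℕ} {y : ℤ} (hy : y < 0) :
    #{a : Fin n | (a : ℤ) = y} = 0 := by
  simp only [card_eq_zero, filter_eq_empty_iff]
  lia

theorem card_filter_mul_add_succ_eq {i j : ℕ} {z : ℤ} (hz : 0 ≤ z) (hzi : z < i * (j + 1)) :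
    #{x : Fin i × Fin j | (x.1 * (j + 1) + (x.2 + 1) : ℤ) = z} =
      if (j + 1 : ℤ) ∣ z then 0 else 1 := by
  lift z to ℕ using hz
  norm_cast at hzi ⊢
  have hmod : ∀ x : Fin i × Fin j, (x.1.val * (j + 1) + (x.2.val + 1)) % (j + 1) = x.2.val + 1 :=
    fun x ↦ by rw [Nat.mul_add_mod_self_right, Nat.mod_eq_of_lt (by lia)]
  have hdiv : ∀ x : Fin i × Fin j, (x.1.val * (j + 1) + (x.2.val + 1)) / (j + 1) = x.1 :=
    fun x ↦ by
      rw [add_comm, Nat.add_mul_div_right _ _ j.succ_pos, Nat.div_eq_of_lt (by lia), zero_add]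
  split_ifs with hdvd
  · simp only [card_eq_zero, filter_eq_empty_iff]
    rintro x - rfl
    have := hmod x
    have := Nat.mod_eq_zero_of_dvd hdvd
    lia
  · have hpos : z % (j + 1) ≠ 0 := mt Nat.dvd_of_mod_eq_zero hdvd
    have hlt : z % (j + 1) < j + 1 := Nat.mod_lt _ j.succ_pos
    have hz' : z / (j + 1) * (j + 1) + z % (j + 1) = z := Nat.div_add_mod' z (j + 1)
    refine card_eq_one.2
      ⟨(⟨z / (j + 1), Nat.div_lt_of_lt_mul (by lia)⟩, ⟨z % (j + 1) - 1, by lia⟩), ?_⟩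
    ext x
    simp only [mem_filter_univ, mem_singleton, Prod.ext_iff, Fin.ext_iff]
    constructor
    · rintro rfl
      exact ⟨(hdiv x).symm, by rw [hmod x, Nat.add_sub_cancel]⟩
    · rintro ⟨h₁, h₂⟩
      rw [h₁, h₂, Nat.sub_add_cancel (Nat.pos_of_ne_zero hpos), hz']

theorem sum_Ico_ite_dvd_sub {m v a b s t : ℤ} (hm : 0 < m) (hst : s ≤ t)
    (has : (s - 1) * m < a - v) (has' : a - v ≤ s * m)
    (hbt : (t - 1) * m < b - v) (hbt' : b - v ≤ t * m) :
    ∑ x ∈ Ico a b, (if m ∣ x - v then 1 else 0 : ℤ) = t - s := by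
  have ceil_eq {c d : ℤ} (h : (d - 1) * m < c - v) (h' : c - v ≤ d * m) :
      ⌈((c : ℚ) - v) / m⌉ = d := by
    have hm' : (0 : ℚ) < m := by exact_mod_cast hm
    rw [Int.ceil_eq_iff, lt_div_iff₀ hm', div_le_iff₀ hm']
    exact_mod_cast And.intro h h'
  have hmod : ∀ x, m ∣ x - v ↔ x ≡ v [ZMOD m] := fun x ↦ by
    rw [Int.modEq_comm, Int.modEq_iff_dvd]
  simp only [hmod, sum_boole]
  rw [Int.Ico_filter_modEq_card a b hm v, ceil_eq has has', ceil_eq hbt hbt',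
    max_eq_left (sub_nonneg.2 hst)]

end General

section Tree

variable {i j : ℕ}

namespace GijVertex

/-- The (index of the) central-path vertex at which the branch of a vertex is attached; a
central-path vertex is its own foot. -/
def foot : GijVertex i j → Fin (i * (j + 1) + 3)
  | Sum.inl a => a
  | Sum.inr (t, _, _) => ⟨t * (j + 1) + 3, by nlinarith [t.isLt]⟩

/-- The distance of a vertex from the central path. -/
def height : GijVertex i j → ℕ
  | Sum.inl _ => 0
  | Sum.inr (_, _, p) => p + 1

/-- The position of a vertex once its branch is unfolded leftwards along the central path; it is
negative where the leftmost branches stick out beyond `c_0`. -/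
def leftEnd (u : GijVertex i j) : ℤ := u.foot - u.height

/-- The position of a vertex once its branch is unfolded rightwards along the central path. -/
def rightEnd (u : GijVertex i j) : ℤ := u.foot + u.height

/-- The unfolding of the tree onto a line in which the branches with foot at least `m` point to the
right and the others to the left. -/
def unfoldAt (m : ℕ) (u : GijVertex i j) : ℤ := if m ≤ u.foot then u.rightEnd else u.leftEnd

theorem height_le (u : GijVertex i j) : u.height ≤ j := by
  rcases u with _ | ⟨_, _, p⟩
  · exact Nat.zero_le j
  · exact p.isLt

theorem le_leftEnd (hj : 3 ≤ j) (u : GijVertex i j) : 3 - (j : ℤ) ≤ u.leftEnd := by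
  rcases u with a | ⟨t, s, p⟩ <;> simp only [leftEnd, foot, height] <;> push_cast
  · lia
  · nlinarith [p.isLt]

theorem rightEnd_lt (u : GijVertex i j) : u.rightEnd < i * (j + 1) + 3 := by
  rcases u with a | ⟨t, s, p⟩ <;> simp only [rightEnd, foot, height] <;> push_cast
  · have := a.isLt
    zify at this
    lia
  · nlinarith [t.isLt, p.isLt]

end GijVertex

theorem GijRel.foot_height {u v : GijVertex i j} (h : GijRel i j u v) :
    ((v.foot : ℕ) = u.foot ∧ v.height = u.height + 1) ∨
      ((v.foot : ℕ) = u.foot + 1 ∧ u.height = 0 ∧ v.height = 0) := by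
  rcases u with a | ⟨t, s, p⟩ <;> rcases v with b | ⟨t', s', p'⟩ <;>
    simp only [GijRel] at h <;> simp only [GijVertex.foot, GijVertex.height]
  · lia
  · lia
  · obtain ⟨rfl, rfl, h⟩ := h
    lia

namespace Gij

open GijVertex

theorem adj_of_rel {u v : GijVertex i j} (h : GijRel i j u v) : (Gij i j).Adj u v := by
  refine (SimpleGraph.fromRel_adj _ _ _).2 ⟨?_, Or.inl h⟩
  rintro rfl
  have := h.foot_height
  lia

theorem abs_unfoldAt_sub_le_one_of_adj (m : ℕ) (u v : GijVertex i j) (h : (Gij i j).Adj u v) :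
    |unfoldAt m u - unfoldAt m v| ≤ 1 := by
  have of_rel {u v : GijVertex i j} (h : GijRel i j u v) :
      |unfoldAt m u - unfoldAt m v| ≤ 1 := by
    have := h.foot_height
    simp only [unfoldAt, leftEnd, rightEnd, abs_le]
    split_ifs <;> omega
  rcases ((SimpleGraph.fromRel_adj _ _ _).1 h).2 with h | h
  · exact of_rel h
  · exact abs_sub_comm (unfoldAt m u) _ ▸ of_rel h

theorem exists_walk_inl_of_le {a b : Fin (i * (j + 1) + 3)} (hab : a ≤ b) :
    ∃ p : (Gij i j).Walk (Sum.inl a) (Sum.inl b), p.length = (b - a : ℕ) := by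
  obtain ⟨n, hn⟩ := Nat.exists_eq_add_of_le (Fin.le_def.1 hab)
  induction n generalizing b with
  | zero =>
    obtain rfl : b = a := Fin.ext hn
    exact ⟨.nil, by simp⟩
  | succ n ih =>
    obtain ⟨p, hp⟩ := ih (b := ⟨a + n, by lia⟩) (Fin.le_def.2 (Nat.le_add_right _ _)) rfl
    have hadj : (Gij i j).Adj (Sum.inl ⟨a + n, by lia⟩) (Sum.inl b) := adj_of_rel hn.symm
    exact ⟨p.concat hadj, by rw [SimpleGraph.Walk.length_concat, hp]; lia⟩

theorem exists_walk_foot (u : GijVertex i j) :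
    ∃ p : (Gij i j).Walk u (Sum.inl u.foot), p.length = u.height := by
  rcases u with a | ⟨t, s, ⟨p, hp⟩⟩
  · exact ⟨.nil, rfl⟩
  · induction p with
    | zero =>
      have hadj : (Gij i j).Adj (Sum.inl (foot (Sum.inr (t, s, ⟨0, hp⟩))))
          (Sum.inr (t, s, ⟨0, hp⟩)) := adj_of_rel ⟨rfl, rfl⟩
      exact ⟨hadj.symm.toWalk, rfl⟩
    | succ p ih =>
      obtain ⟨w, hw⟩ := ih (Nat.lt_of_succ_lt hp)
      have hadj : (Gij i j).Adj (Sum.inr (t, s, ⟨p, Nat.lt_of_succ_lt hp⟩))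
          (Sum.inr (t, s, ⟨p + 1, hp⟩)) := adj_of_rel ⟨rfl, rfl, rfl⟩
      exact ⟨w.cons hadj.symm, congrArg Nat.succ hw⟩

theorem exists_walk_of_foot_le {u v : GijVertex i j} (huv : u.foot ≤ v.foot) :
    ∃ p : (Gij i j).Walk u v, (p.length : ℤ) = v.rightEnd - u.leftEnd := by
  obtain ⟨p, hp⟩ := exists_walk_foot u
  obtain ⟨q, hq⟩ := exists_walk_foot v
  obtain ⟨w, hw⟩ := exists_walk_inl_of_le huv
  refine ⟨p.append (w.append q.reverse), ?_⟩
  simp only [SimpleGraph.Walk.length_append, SimpleGraph.Walk.length_reverse, leftEnd, rightEnd]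
  lia

theorem dist_le_of_foot_le {u v : GijVertex i j} (huv : u.foot ≤ v.foot) :
    ((Gij i j).dist u v : ℤ) ≤ v.rightEnd - u.leftEnd := by
  obtain ⟨p, hp⟩ := exists_walk_of_foot_le huv
  exact hp ▸ Int.ofNat_le.2 (SimpleGraph.dist_le p)

theorem dist_eq_of_foot_lt {u v : GijVertex i j} (huv : u.foot < v.foot) :
    ((Gij i j).dist u v : ℤ) = v.rightEnd - u.leftEnd := by
  refine le_antisymm (dist_le_of_foot_le huv.le) ?_
  obtain ⟨p, -⟩ := exists_walk_of_foot_le huv.le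
  have hle := abs_sub_le_dist_of_adj (abs_unfoldAt_sub_le_one_of_adj v.foot) p.reachable
  rw [unfoldAt, unfoldAt, if_pos le_rfl, if_neg (Fin.lt_def.1 huv).not_ge, abs_sub_comm] at hle
  exact (le_abs_self _).trans hle

theorem dist_eq_iff {k : ℕ} (hk : 2 * j < k) (u v : GijVertex i j) :
    (Gij i j).dist u v = k ↔ v.rightEnd = u.leftEnd + k ∨ u.rightEnd = v.leftEnd + k := by
  have hu := u.height_le
  have hv := v.height_le
  rcases lt_trichotomy u.foot v.foot with huv | huv | huv
  · have := dist_eq_of_foot_lt huv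
    simp only [leftEnd, rightEnd, Fin.lt_def] at *
    omega
  · have := dist_le_of_foot_le huv.le
    simp only [leftEnd, rightEnd, huv] at *
    omega
  · have := dist_eq_of_foot_lt huv
    rw [SimpleGraph.dist_comm] at this
    simp only [leftEnd, rightEnd, Fin.lt_def] at *
    omega

open Finset

theorem pexact_eq_card {k : ℕ} (hk : 2 * j < k) :
    pexact (Gij i j) k =
      #{p : GijVertex i j × GijVertex i j | p.2.rightEnd = p.1.leftEnd + k} := by
  have hdisj : Disjoint
      ({p | p.2.rightEnd = p.1.leftEnd + k} : Finset (GijVertex i j × GijVertex i j))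
      ({p | p.1.rightEnd = p.2.leftEnd + k} : Finset (GijVertex i j × GijVertex i j)) :=
    disjoint_filter.2 fun p _ h₁ h₂ ↦ by
      have := p.1.height_le
      have := p.2.height_le
      simp only [leftEnd, rightEnd] at h₁ h₂
      omega
  have hswap : #{p : GijVertex i j × GijVertex i j | p.1.rightEnd = p.2.leftEnd + k} =
      #{p : GijVertex i j × GijVertex i j | p.2.rightEnd = p.1.leftEnd + k} :=
    card_equiv (Equiv.prodComm _ _) (by simp)
  simp only [pexact, dist_eq_iff hk]
  rw [filter_or, card_union_of_disjoint hdisj, hswap, ← two_mul,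
    Nat.mul_div_cancel_left _ two_pos]

theorem card_filter_vertex (P : GijVertex i j → Prop) [DecidablePred P] :
    #{v | P v} = #{a | P (Sum.inl a)} +
      ∑ s, #{x : Fin i × Fin j | P (Sum.inr (x.1, s, x.2))} := by
  simp only [card_filter, Fintype.sum_sum_type, Fintype.sum_prod_type]
  congr 1
  rw [sum_comm]

theorem card_rightEnd_eq (y : ℤ) :
    #{v : GijVertex i j | v.rightEnd = y} = #{a : Fin (i * (j + 1) + 3) | (a : ℤ) = y} +
      2 * #{x : Fin i × Fin j | (x.1 * (j + 1) + (x.2 + 1) : ℤ) = y - 3} := by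
  have hinr (s : Bool) (x : Fin i × Fin j) :
      rightEnd (Sum.inr (x.1, s, x.2)) = y ↔ (x.1 * (j + 1) + (x.2 + 1) : ℤ) = y - 3 := by
    simp only [rightEnd, foot, height]
    push_cast
    constructor <;> intro h <;> linarith
  rw [card_filter_vertex]
  simp only [hinr]
  simp [rightEnd, foot, height]

theorem card_leftEnd_eq (x : ℤ) :
    #{u : GijVertex i j | u.leftEnd = x} = #{a : Fin (i * (j + 1) + 3) | (a : ℤ) = x} +
      2 * #{y : Fin i × Fin j | (y.1 * (j + 1) + (y.2 + 1) : ℤ) = x - 3 + (j + 1)} := by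
  -- Reversing a branch turns an unfolding to the left into one to the right.
  have hinr (s : Bool) : #{y : Fin i × Fin j | leftEnd (Sum.inr (y.1, s, y.2)) = x} =
      #{y : Fin i × Fin j | (y.1 * (j + 1) + (y.2 + 1) : ℤ) = x - 3 + (j + 1)} := by
    refine card_equiv ((Equiv.refl _).prodCongr Fin.revPerm) fun y ↦ ?_
    have hrev : ((Fin.rev y.2 : ℕ) : ℤ) = j - (y.2 + 1) := by rw [Fin.val_rev]; omega
    rw [mem_filter_univ, mem_filter_univ]
    simp only [Equiv.prodCongr_apply, Prod.map, Equiv.refl_apply, Fin.revPerm_apply, hrev,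
      leftEnd, foot, height]
    push_cast
    constructor <;> intro h <;> linarith
  rw [card_filter_vertex]
  simp only [hinr]
  simp [leftEnd, foot, height]

/-- The indicator function of the positions `x ≡ 3 (mod j + 1)`, which on the central path are the
vertices `c_{t(j+1)+3}` carrying branches. -/
def junction (j : ℕ) (x : ℤ) : ℤ := if (j + 1 : ℤ) ∣ x - 3 then 1 else 0

theorem card_rightEnd_eq_of_mem_Ico {y : ℤ} (hy : y ∈ Ico 4 (i * (j + 1) + 3 : ℤ)) :
    (#{v : GijVertex i j | v.rightEnd = y} : ℤ) = 3 - 2 * junction j y := by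
  obtain ⟨h₁, h₂⟩ := mem_Ico.1 hy
  rw [card_rightEnd_eq, card_filter_fin_cast_eq_one (by lia) (by push_cast; lia),
    card_filter_mul_add_succ_eq (by lia) (by lia), junction]
  split_ifs <;> simp

theorem card_leftEnd_eq_of_nonneg (hj : 2 ≤ j) {x : ℤ} (hx : 0 ≤ x)
    (hxi : x < (i - 1) * (j + 1) + 3) :
    (#{u : GijVertex i j | u.leftEnd = x} : ℤ) = 3 - 2 * junction j x := by
  rw [card_leftEnd_eq, card_filter_fin_cast_eq_one hx (by push_cast; linarith),
    card_filter_mul_add_succ_eq (by lia) (by linarith), junction]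
  simp only [dvd_add_self_right]
  split_ifs <;> simp

theorem card_leftEnd_eq_of_neg (hi : 0 < i) {x : ℤ} (hx : x ∈ Ico (3 - j : ℤ) 0) :
    #{u : GijVertex i j | u.leftEnd = x} = 2 := by
  obtain ⟨h₁, h₂⟩ := mem_Ico.1 hx
  have hndvd : ¬(j + 1 : ℤ) ∣ x - 3 + (j + 1) := fun h ↦ by
    have := Int.le_of_dvd (by lia) h
    lia
  rw [card_leftEnd_eq, card_filter_fin_cast_eq_zero h₂,
    card_filter_mul_add_succ_eq (by lia) (by nlinarith), if_neg hndvd]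

section Count

variable {r k : ℕ}

theorem junction_mul_junction_add (hk₁ : r * (j + 1) < k) (hk₂ : k < (r + 1) * (j + 1)) (x : ℤ) :
    junction j x * junction j (x + k) = 0 := by
  have hndvd : ¬(j + 1 : ℤ) ∣ k := by
    norm_cast
    exact Nat.not_dvd_of_lt_of_lt_mul_succ (k := r) (by lia) (by lia)
  simp only [junction, mul_ite, mul_one, mul_zero, ite_eq_right_iff, one_ne_zero]
  intro h h'
  exact hndvd (by simpa using dvd_sub h h')

theorem pexact_eq_sum (hj : 3 ≤ j) (hk : 2 * j < k) :
    (pexact (Gij i j) k : ℤ) = ∑ x ∈ Ico (3 - j : ℤ) (i * (j + 1) + 3 - k),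
      (#{u : GijVertex i j | u.leftEnd = x} : ℤ) * (3 - 2 * junction j (x + k)) := by
  rw [pexact_eq_card hk, card_filter_eq_add_eq_sum leftEnd rightEnd (k : ℤ)
    (s := Ico (3 - j : ℤ) (i * (j + 1) + 3 - k))]
  · push_cast
    refine sum_congr rfl fun x hx ↦ ?_
    rw [mem_Ico] at hx
    rw [card_rightEnd_eq_of_mem_Ico (mem_Ico.2 ⟨by lia, by lia⟩)]
  · intro u v huv
    have := u.le_leftEnd hj
    have := v.rightEnd_lt
    exact mem_Ico.2 ⟨by lia, by lia⟩

theorem sum_junction_Ico {a b s t : ℤ} (hst : s ≤ t)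
    (has : (s - 1) * (j + 1) + 3 < a) (has' : a ≤ s * (j + 1) + 3)
    (hbt : (t - 1) * (j + 1) + 3 < b) (hbt' : b ≤ t * (j + 1) + 3) :
    ∑ x ∈ Ico a b, junction j x = t - s :=
  sum_Ico_ite_dvd_sub (by positivity) hst (by linarith) (by linarith) (by linarith) (by linarith)

theorem sum_card_leftEnd_mul_of_neg (hi : 0 < i) (hk₁ : r * (j + 1) + 4 ≤ k)
    (hk₂ : k ≤ r * (j + 1) + j) :
    ∑ x ∈ Ico (3 - j : ℤ) 0,
      (#{u : GijVertex i j | u.leftEnd = x} : ℤ) * (3 - 2 * junction j (x + k)) =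
        6 * (j - 3) - 4 := by
  have hj : 4 ≤ j := by lia
  zify at hk₁ hk₂ hj
  have hjunction : ∑ x ∈ Ico (3 - j : ℤ) 0, junction j (x + k) = 1 := by
    rw [sum_Ico_add' (junction j), sum_junction_Ico (s := r) (t := r + 1)] <;> linarith
  calc _ = ∑ x ∈ Ico (3 - j : ℤ) 0, (6 - 4 * junction j (x + k)) :=
        sum_congr rfl fun x hx ↦ by
          rw [card_leftEnd_eq_of_neg hi hx]
          push_cast
          ring
    _ = 6 * (j - 3) - 4 := by
      rw [sum_sub_distrib, ← mul_sum, hjunction, sum_const, Int.card_Ico, nsmul_eq_mul,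
        Int.toNat_of_nonneg (by lia)]
      ring

theorem sum_card_leftEnd_mul_of_nonneg (hr : 0 < r) (hri : r < i)
    (hk₁ : r * (j + 1) + 4 ≤ k) (hk₂ : k ≤ r * (j + 1) + j) :
    ∑ x ∈ Ico (0 : ℤ) (i * (j + 1) + 3 - k),
      (#{u : GijVertex i j | u.leftEnd = x} : ℤ) * (3 - 2 * junction j (x + k)) =
        9 * (i * (j + 1) + 3 - k) - 6 * (i - r) - 6 * (i - r - 1) := by
  have hmul := junction_mul_junction_add (j := j) (r := r) (k := k) (by lia) (by lia)
  have hj : 4 ≤ j := by lia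
  zify at hr hri hk₁ hk₂ hj
  have hlast : (r + 1 : ℤ) * (j + 1) ≤ i * (j + 1) := by gcongr; lia
  have hfirst : (1 : ℤ) * (j + 1) ≤ r * (j + 1) := by gcongr; lia
  have hleft : ∑ x ∈ Ico (0 : ℤ) (i * (j + 1) + 3 - k), junction j x = i - r := by
    rw [sum_junction_Ico (s := 0) (t := i - r)] <;> linarith
  have hright : ∑ x ∈ Ico (0 : ℤ) (i * (j + 1) + 3 - k), junction j (x + k) = i - r - 1 := by
    rw [sum_Ico_add' (junction j), sum_junction_Ico (s := r + 1) (t := i)] <;> linarith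
  calc _ = ∑ x ∈ Ico (0 : ℤ) (i * (j + 1) + 3 - k),
          (9 - 6 * junction j x - 6 * junction j (x + k)) :=
        sum_congr rfl fun x hx ↦ by
          rw [mem_Ico] at hx
          rw [card_leftEnd_eq_of_nonneg (by lia) hx.1 (by linarith)]
          linear_combination 4 * hmul x
    _ = _ := by
      rw [sum_sub_distrib, sum_sub_distrib, ← mul_sum, ← mul_sum, hleft, hright, sum_const,
        Int.card_Ico, nsmul_eq_mul, Int.toNat_of_nonneg (by linarith)]
      ring

end Count

end Gij

end Tree

/-- In `G_{i,j}` with `i ≥ 3`, `j ≥ 5`, for `2 ≤ r ≤ i-1` and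
`r(j+1)+4 ≤ k ≤ (r+1)j + r - 1`, the number of unordered pairs of vertices at distance
exactly `k` equals `-9k + i(9j-3) + 6j + 12r + 11`. -/
theorem Gij_pexact (i j r k : ℕ) (hi : 3 ≤ i) (hj : 5 ≤ j) (hr2 : 2 ≤ r)
    (hri : r ≤ i - 1) (hk1 : r*(j+1)+4 ≤ k) (hk2 : k ≤ (r+1)*j + r - 1) :
    (pexact (Gij i j) k : ℤ) =
      -9 * (k : ℤ) + (i : ℤ) * (9*(j : ℤ) - 3) + 6*(j : ℤ) + 12*(r : ℤ) + 11 := by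
  have hk : k ≤ r * (j + 1) + j := by lia
  have hrj : 2 * (j + 1) ≤ r * (j + 1) := Nat.mul_le_mul_right _ hr2
  have hend : (0 : ℤ) ≤ i * (j + 1) + 3 - k := by
    have : (r + 1) * (j + 1) ≤ i * (j + 1) := Nat.mul_le_mul_right _ (by lia)
    zify at this hk
    linarith
  rw [Gij.pexact_eq_sum (by lia) (by lia), ← Finset.Ico_union_Ico_eq_Ico (by lia) hend,
    Finset.sum_union (Finset.Ico_disjoint_Ico_consecutive _ _ _),
    Gij.sum_card_leftEnd_mul_of_neg (by lia) hk1 hk,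
    Gij.sum_card_leftEnd_mul_of_nonneg (by lia) (by lia) hk1 hk]
  ring
end

section
/- If a finite real sequence b = (b_1, …, b_N) has q pairwise disjoint intervals each of which is a dip, then every monotone real sequence c = (c_1, …, c_N) of the same length differs from b in at least q positions; that is, #{ m : b_m ≠ c_m } ≥ q. -/
open scoped Classical

/-- The segment of `b` on the index interval `[l, r]` is monotonically non-increasing. -/
def NonIncOn {N : ℕ} (b : Fin N → ℝ) (l r : Fin N) : Prop :=
  ∀ m m' : Fin N, l ≤ m → m ≤ m' → m' ≤ r → b m' ≤ b m

/-- The segment of `b` on the index interval `[l, r]` is monotonically non-decreasing. -/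
def NonDecOn {N : ℕ} (b : Fin N → ℝ) (l r : Fin N) : Prop :=
  ∀ m m' : Fin N, l ≤ m → m ≤ m' → m' ≤ r → b m ≤ b m'

/-- The interval `[l, r]` of the sequence `b` is a dip: it can be partitioned into a
monotonically non-increasing part followed by a monotonically non-decreasing part, but
the entire interval is neither monotonically non-increasing nor non-decreasing. -/
def IsDip {N : ℕ} (b : Fin N → ℝ) (l r : Fin N) : Prop :=
  l ≤ r ∧
  (∃ m : Fin N, l ≤ m ∧ m ≤ r ∧ NonIncOn b l m ∧ NonDecOn b m r) ∧
  ¬ NonIncOn b l r ∧ ¬ NonDecOn b l r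

theorem disjoint_Icc_of_lt {α : Type*} [Preorder α] {a₁ b₁ a₂ b₂ : α} (h : b₁ < a₂) :
    Disjoint (Set.Icc a₁ b₁) (Set.Icc a₂ b₂) :=
  Set.disjoint_left.mpr fun _ hx₁ hx₂ => (hx₁.2.trans_lt h).not_ge hx₂.1

theorem pairwise_disjoint_Icc_of_lt_or_lt {ι α : Type*} [Preorder α] {lo hi : ι → α}
    (h : ∀ i j, i ≠ j → hi i < lo j ∨ hi j < lo i) :
    Pairwise (Function.onFun Disjoint fun i => Set.Icc (lo i) (hi i)) := fun i j hij =>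
  (h i j hij).elim disjoint_Icc_of_lt fun hji => (disjoint_Icc_of_lt hji).symm

theorem card_le_encard_of_pairwise_disjoint {ι α : Type*} {s : ι → Set α} {t : Set α}
    (hs : Pairwise (Function.onFun Disjoint s)) (ht : ∀ i, (s i ∩ t).Nonempty) :
    ENat.card ι ≤ t.encard := by
  choose f hfs hft using ht
  have f_injective : Function.Injective f := fun i j hij =>
    hs.eq (Set.not_disjoint_iff.mpr ⟨f i, hfs i, hij ▸ hfs j⟩)
  exact ENat.card_le_card_of_injective (f_injective.codRestrict hft)

section Preorder

variable {α β : Type*} [Preorder α] [Preorder β] {b c : α → β}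

theorem exists_mem_ne_of_not_monotoneOn_of_not_antitoneOn {s : Set α}
    (hb_mono : ¬MonotoneOn b s) (hb_anti : ¬AntitoneOn b s)
    (hc : MonotoneOn c s ∨ AntitoneOn c s) : ∃ x ∈ s, b x ≠ c x := by
  by_contra! hbc
  have c_eqOn_b : s.EqOn c b := fun x hx => (hbc x hx).symm
  rcases hc with c_mono | c_anti
  · exact hb_mono (c_mono.congr c_eqOn_b)
  · exact hb_anti (c_anti.congr c_eqOn_b)

theorem dips_force_changes_general {ι : Type*} {s : ι → Set α}
    (hs : Pairwise (Function.onFun Disjoint s))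
    (hb_mono : ∀ i, ¬MonotoneOn b (s i)) (hb_anti : ∀ i, ¬AntitoneOn b (s i))
    (hc : ∀ i, MonotoneOn c (s i) ∨ AntitoneOn c (s i)) :
    ENat.card ι ≤ {x | b x ≠ c x}.encard :=
  card_le_encard_of_pairwise_disjoint hs fun i =>
    exists_mem_ne_of_not_monotoneOn_of_not_antitoneOn (hb_mono i) (hb_anti i) (hc i)

end Preorder

section IsDip

variable {N : ℕ} {b : Fin N → ℝ} {l r : Fin N}

theorem nonDecOn_iff_monotoneOn_Icc :
    NonDecOn b l r ↔ MonotoneOn b (Set.Icc l r) :=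
  ⟨fun h _ hx _ hy hxy => h _ _ hx.1 hxy hy.2,
    fun h _ _ hl hm hr => h ⟨hl, hm.trans hr⟩ ⟨hl.trans hm, hr⟩ hm⟩

theorem nonIncOn_iff_antitoneOn_Icc :
    NonIncOn b l r ↔ AntitoneOn b (Set.Icc l r) :=
  ⟨fun h _ hx _ hy hxy => h _ _ hx.1 hxy hy.2,
    fun h _ _ hl hm hr => h ⟨hl, hm.trans hr⟩ ⟨hl.trans hm, hr⟩ hm⟩

theorem IsDip.not_monotoneOn_Icc (h : IsDip b l r) : ¬MonotoneOn b (Set.Icc l r) :=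
  nonDecOn_iff_monotoneOn_Icc.not.mp h.2.2.2

theorem IsDip.not_antitoneOn_Icc (h : IsDip b l r) : ¬AntitoneOn b (Set.Icc l r) :=
  nonIncOn_iff_antitoneOn_Icc.not.mp h.2.2.1

end IsDip

/-- If a finite real sequence `b` has `q` pairwise disjoint intervals each of which is a
dip, then every monotone sequence `c` of the same length differs from `b` in at least `q`
positions. -/
theorem dips_force_changes (N q : ℕ) (b c : Fin N → ℝ) (lo hi : Fin q → Fin N)
    (hdip : ∀ t, IsDip b (lo t) (hi t))
    (hdisj : ∀ t t', t ≠ t' → hi t < lo t' ∨ hi t' < lo t)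
    (hmono : Monotone c ∨ Antitone c) :
    q ≤ (Finset.univ.filter (fun m : Fin N => b m ≠ c m)).card := by
  have card_le := dips_force_changes_general (pairwise_disjoint_Icc_of_lt_or_lt hdisj)
    (fun t => (hdip t).not_monotoneOn_Icc) (fun t => (hdip t).not_antitoneOn_Icc)
    fun _ => hmono.imp (fun h => h.monotoneOn _) fun h => h.antitoneOn _
  simpa [← Nat.cast_le (α := ℕ∞), ← Set.encard_coe_eq_coe_finsetCard] using card_le
end
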